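/- arXiv:2509.24337 — 12 statements merged into one kernel-verified Lean document; each statement's English description precedes it below -/
import Mathlib

section
/- Suppose Q ∈ B(X₊, X₋) is a stabilizing solution of the Riccati equation (R1). Let δ₋, δ₊ ∈ B(U) be invertible operators with δ₋δ₊ = δ − γ₋Qβ₊, and set γ₊° := δ₋⁻¹(γ₊ − γ₋Qα₊), β₋° := (β₋ − α₋Qβ₊)δ₊⁻¹, V₋(z) := δ₋ + γ₋(zI − α₋)⁻¹β₋°, and V₊(z) := δ₊ + z·γ₊°(I − zα₊)⁻¹β₊. Then: (a) R(z) = V₋(z)V₊(z) for every z ∈ ℂ for which I − zα₊ and zI − α₋ are invertible (in particular for all z on the unit circle 𝕋); (b) for every z for which I − zα₊ and I − zα₊° are invertible, V₊(z) is invertible with V₊(z)⁻¹ = δ₊⁻¹ − z·δ₊⁻¹γ₊°(I − zα₊°)⁻¹β₊δ₊⁻¹; (c) for every z for which zI − α₋ and zI − α₋° are invertible, V₋(z) is invertible with V₋(z)⁻¹ = δ₋⁻¹ − δ₋⁻¹γ₋(zI − α₋°)⁻¹β₋°δ₋⁻¹. Consequently, R = V₋V₊ is a right canonical Wiener–Hopf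 factorization of R. -/
open Metric ContinuousLinearMap

noncomputable section

variable {U Xp Xm : Type*}
  [NormedAddCommGroup U] [InnerProductSpace ℂ U] [CompleteSpace U]
  [NormedAddCommGroup Xp] [InnerProductSpace ℂ Xp] [CompleteSpace Xp]
  [NormedAddCommGroup Xm] [InnerProductSpace ℂ Xm] [CompleteSpace Xm]

/-- The stable representation
`R(z) = δ + z·γ₊(I − zα₊)⁻¹β₊ + γ₋(zI − α₋)⁻¹β₋`. -/
def Rfun (δ : U →L[ℂ] U) (γp : Xp →L[ℂ] U) (αp : Xp →L[ℂ] Xp) (βp : U →L[ℂ] Xp)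
    (γm : Xm →L[ℂ] U) (αm : Xm →L[ℂ] Xm) (βm : U →L[ℂ] Xm) (z : ℂ) : U →L[ℂ] U :=
  δ + z • ((γp ∘L Ring.inverse (1 - z • αp)) ∘L βp) +
    (γm ∘L Ring.inverse (z • (1 : Xm →L[ℂ] Xm) - αm)) ∘L βm

/-- `Q` solves the Riccati equation (R1):
`δ − γ₋Qβ₊` is invertible and
`Q = α₋Qα₊ + (β₋ − α₋Qβ₊)(δ − γ₋Qβ₊)⁻¹(γ₊ − γ₋Qα₊)`. -/
def SolvesR1 (δ : U →L[ℂ] U) (γp : Xp →L[ℂ] U) (αp : Xp →L[ℂ] Xp) (βp : U →L[ℂ] Xp)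
    (γm : Xm →L[ℂ] U) (αm : Xm →L[ℂ] Xm) (βm : U →L[ℂ] Xm) (Q : Xp →L[ℂ] Xm) : Prop :=
  IsUnit (δ - (γm ∘L Q) ∘L βp) ∧
    Q = (αm ∘L Q) ∘L αp +
      ((βm - (αm ∘L Q) ∘L βp) ∘L Ring.inverse (δ - (γm ∘L Q) ∘L βp)) ∘L
        (γp - (γm ∘L Q) ∘L αp)

/-- The operator `α₊° := α₊ − β₊(δ − γ₋Qβ₊)⁻¹(γ₊ − γ₋Qα₊)`. -/
def alphaPcirc (δ : U →L[ℂ] U) (γp : Xp →L[ℂ] U) (αp : Xp →L[ℂ] Xp) (βp : U →L[ℂ] Xp)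
    (γm : Xm →L[ℂ] U) (Q : Xp →L[ℂ] Xm) : Xp →L[ℂ] Xp :=
  αp - (βp ∘L Ring.inverse (δ - (γm ∘L Q) ∘L βp)) ∘L (γp - (γm ∘L Q) ∘L αp)

/-- The operator `α₋° := α₋ − (β₋ − α₋Qβ₊)(δ − γ₋Qβ₊)⁻¹γ₋`. -/
def alphaMcirc (δ : U →L[ℂ] U) (βp : U →L[ℂ] Xp) (γm : Xm →L[ℂ] U) (αm : Xm →L[ℂ] Xm)
    (βm : U →L[ℂ] Xm) (Q : Xp →L[ℂ] Xm) : Xm →L[ℂ] Xm :=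
  αm - ((βm - (αm ∘L Q) ∘L βp) ∘L Ring.inverse (δ - (γm ∘L Q) ∘L βp)) ∘L γm

/-- A solution `Q` of (R1) is stabilizing if `α₊°` and `α₋°` have spectrum contained in
the open unit disc. -/
def StabilizingR1 (δ : U →L[ℂ] U) (γp : Xp →L[ℂ] U) (αp : Xp →L[ℂ] Xp) (βp : U →L[ℂ] Xp)
    (γm : Xm →L[ℂ] U) (αm : Xm →L[ℂ] Xm) (βm : U →L[ℂ] Xm) (Q : Xp →L[ℂ] Xm) : Prop :=
  spectrum ℂ (alphaPcirc δ γp αp βp γm Q) ⊆ ball (0 : ℂ) 1 ∧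
    spectrum ℂ (alphaMcirc δ βp γm αm βm Q) ⊆ ball (0 : ℂ) 1

/-- A `B(U)`-valued function of "plus type": analytic on an open neighborhood of the
closed unit disc, with invertible values and analytic pointwise inverse there. -/
def PlusFactor {E : Type*} [NormedAddCommGroup E] [InnerProductSpace ℂ E] [CompleteSpace E]
    (V : ℂ → (E →L[ℂ] E)) : Prop :=
  ∃ S : Set ℂ, IsOpen S ∧ closedBall (0 : ℂ) 1 ⊆ S ∧
    AnalyticOnNhd ℂ V S ∧ (∀ z ∈ S, IsUnit (V z)) ∧
    AnalyticOnNhd ℂ (fun z => Ring.inverse (V z)) S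

/-- A `B(U)`-valued function of "minus type" on the complement of the open unit disc:
`z ↦ V(1/z)` (with the value at `0` corresponding to `V(∞)`) extends to a function
that is analytic on an open neighborhood of the closed unit disc, with invertible
values and analytic pointwise inverse there. -/
def MinusFactor {E : Type*} [NormedAddCommGroup E] [InnerProductSpace ℂ E] [CompleteSpace E]
    (V : ℂ → (E →L[ℂ] E)) : Prop :=
  ∃ Vhat : ℂ → (E →L[ℂ] E), PlusFactor Vhat ∧ ∀ z : ℂ, 1 ≤ ‖z‖ → V z = Vhat z⁻¹

/-- A right canonical Wiener–Hopf factorization `R(z) = V₋(z)V₊(z)` on the unit circle. -/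
def RightCanonicalWH {E : Type*} [NormedAddCommGroup E] [InnerProductSpace ℂ E]
    [CompleteSpace E] (R : ℂ → (E →L[ℂ] E)) : Prop :=
  ∃ Vm Vp : ℂ → (E →L[ℂ] E), MinusFactor Vm ∧ PlusFactor Vp ∧
    ∀ z : ℂ, ‖z‖ = 1 → R z = Vm z * Vp z

/-- A left canonical Wiener–Hopf factorization `R(z) = W₊(z)W₋(z)` on the unit circle. -/
def LeftCanonicalWH {E : Type*} [NormedAddCommGroup E] [InnerProductSpace ℂ E]
    [CompleteSpace E] (R : ℂ → (E →L[ℂ] E)) : Prop :=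
  ∃ Wp Wm : ℂ → (E →L[ℂ] E), PlusFactor Wp ∧ MinusFactor Wm ∧
    ∀ z : ℂ, ‖z‖ = 1 → R z = Wp z * Wm z

/-- Woodbury-type inversion: if `N` and `N + B d⁻¹ C` are invertible, then `d + C N⁻¹ B` is
invertible with inverse `d⁻¹ - d⁻¹ C (N + B d⁻¹ C)⁻¹ B d⁻¹`. -/
theorem isUnit_and_inverse_add_comp_inverse_comp {E X : Type*}
    [NormedAddCommGroup E] [InnerProductSpace ℂ E] [NormedAddCommGroup X] [InnerProductSpace ℂ X]
    (d : E →L[ℂ] E) (C : X →L[ℂ] E) (B : E →L[ℂ] X) (N N' : X →L[ℂ] X)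
    (hd : IsUnit d) (hN : IsUnit N) (hN' : IsUnit N')
    (h : N' = N + (B ∘L Ring.inverse d) ∘L C) :
    IsUnit (d + (C ∘L Ring.inverse N) ∘L B) ∧
      Ring.inverse (d + (C ∘L Ring.inverse N) ∘L B) = Ring.inverse d -
        ((Ring.inverse d ∘L C) ∘L Ring.inverse N') ∘L (B ∘L Ring.inverse d) := by
  have hdi : ∀ x, d (Ring.inverse d x) = x := fun x =>
    DFunLike.congr_fun (Ring.mul_inverse_cancel d hd) x
  have hid : ∀ x, Ring.inverse d (d x) = x := fun x =>
    DFunLike.congr_fun (Ring.inverse_mul_cancel d hd) x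
  have hBC : ∀ x, B (Ring.inverse d (C x)) = N' x - N x := fun x => by simp [h]
  have hNi : ∀ x, N (Ring.inverse N x) = x := fun x =>
    DFunLike.congr_fun (Ring.mul_inverse_cancel N hN) x
  have hiN : ∀ x, Ring.inverse N (N x) = x := fun x =>
    DFunLike.congr_fun (Ring.inverse_mul_cancel N hN) x
  have hNi' : ∀ x, N' (Ring.inverse N' x) = x := fun x =>
    DFunLike.congr_fun (Ring.mul_inverse_cancel N' hN') x
  have hiN' : ∀ x, Ring.inverse N' (N' x) = x := fun x =>
    DFunLike.congr_fun (Ring.inverse_mul_cancel N' hN') x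
  set W := Ring.inverse d -
    ((Ring.inverse d ∘L C) ∘L Ring.inverse N') ∘L (B ∘L Ring.inverse d) with hW
  have hVW : (d + (C ∘L Ring.inverse N) ∘L B) * W = 1 := by
    ext x
    simp [hW, hdi, hBC, hiN, hNi']
  have hWV : W * (d + (C ∘L Ring.inverse N) ∘L B) = 1 := by
    ext x
    simp [hW, hid, hBC, hNi, hiN']
  let u : (E →L[ℂ] E)ˣ := ⟨_, W, hVW, hWV⟩
  exact ⟨u.isUnit, Ring.inverse_unit u⟩

/-- If the spectrum of `A` lies in the open unit disc, `1 - z A` is invertible for `‖z‖ ≤ 1`. -/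
theorem isUnit_one_sub_smul_of_spectrum_subset_ball {X : Type*}
    [NormedAddCommGroup X] [InnerProductSpace ℂ X] {A : X →L[ℂ] X}
    (hA : spectrum ℂ A ⊆ ball (0 : ℂ) 1) {z : ℂ} (hz : ‖z‖ ≤ 1) : IsUnit (1 - z • A) := by
  rcases eq_or_ne z 0 with rfl | h0
  · simp
  have hmem : z⁻¹ ∉ spectrum ℂ A := fun hmem => by
    have := hA hmem
    rw [mem_ball_zero_iff, norm_inv] at this
    exact absurd this (not_lt.mpr ((one_le_inv₀ (norm_pos_iff.mpr h0)).mpr hz))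
  rw [spectrum.notMem_iff, Algebra.algebraMap_eq_smul_one] at hmem
  have := hmem.smul (Units.mk0 z h0)
  rwa [Units.smul_mk0, smul_sub, smul_inv_smul₀ h0] at this

/-- If the spectrum of `A` lies in the open unit disc, `z - A` is invertible for `1 ≤ ‖z‖`. -/
theorem isUnit_smul_one_sub_of_spectrum_subset_ball {X : Type*}
    [NormedAddCommGroup X] [InnerProductSpace ℂ X] {A : X →L[ℂ] X}
    (hA : spectrum ℂ A ⊆ ball (0 : ℂ) 1) {z : ℂ} (hz : 1 ≤ ‖z‖) :
    IsUnit (z • (1 : X →L[ℂ] X) - A) := by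
  have hmem : z ∉ spectrum ℂ A := fun hmem =>
    absurd (mem_ball_zero_iff.mp (hA hmem)) (not_lt.mpr hz)
  rwa [spectrum.notMem_iff, Algebra.algebraMap_eq_smul_one] at hmem

/-- The inverse of `d + z C (1 - z A)⁻¹ B` in terms of the resolvent of `A - B d⁻¹ C`. -/
theorem isUnit_and_inverse_realization {E X : Type*}
    [NormedAddCommGroup E] [InnerProductSpace ℂ E] [NormedAddCommGroup X] [InnerProductSpace ℂ X]
    {d : E →L[ℂ] E} (hd : IsUnit d) (C : X →L[ℂ] E) (B : E →L[ℂ] X) (A : X →L[ℂ] X) {z : ℂ}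
    (hA : IsUnit (1 - z • A)) (hA' : IsUnit (1 - z • (A - (B ∘L Ring.inverse d) ∘L C))) :
    IsUnit (d + z • ((C ∘L Ring.inverse (1 - z • A)) ∘L B)) ∧
      Ring.inverse (d + z • ((C ∘L Ring.inverse (1 - z • A)) ∘L B)) = Ring.inverse d -
        z • (((Ring.inverse d ∘L C) ∘L
          Ring.inverse (1 - z • (A - (B ∘L Ring.inverse d) ∘L C))) ∘L (B ∘L Ring.inverse d)) := by
  have := isUnit_and_inverse_add_comp_inverse_comp d (z • C) B _ _ hd hA hA'
    (by simp only [comp_smul, smul_sub]; abel)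
  simpa only [comp_smul, smul_comp] using this

/-- A realization `d + z C (1 - z A)⁻¹ B` is of plus type as soon as `A` and `A - B d⁻¹ C`
have their spectra in the open unit disc. -/
theorem plusFactor_realization {E X : Type*}
    [NormedAddCommGroup E] [InnerProductSpace ℂ E] [CompleteSpace E]
    [NormedAddCommGroup X] [InnerProductSpace ℂ X] [CompleteSpace X]
    {d : E →L[ℂ] E} (hd : IsUnit d) (C : X →L[ℂ] E) (B : E →L[ℂ] X) (A : X →L[ℂ] X)
    (hA : spectrum ℂ A ⊆ ball (0 : ℂ) 1)
    (hA' : spectrum ℂ (A - (B ∘L Ring.inverse d) ∘L C) ⊆ ball (0 : ℂ) 1) :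
    PlusFactor (fun z : ℂ => d + z • ((C ∘L Ring.inverse (1 - z • A)) ∘L B)) := by
  set A' := A - (B ∘L Ring.inverse d) ∘L C
  have hopen : ∀ T : X →L[ℂ] X, IsOpen {z : ℂ | IsUnit (1 - z • T)} := fun T =>
    Units.isOpen.preimage (by fun_prop)
  have hSopen := (hopen A).inter (hopen A')
  have hunit : ∀ z ∈ {z : ℂ | IsUnit (1 - z • A)} ∩ {z : ℂ | IsUnit (1 - z • A')},
      IsUnit (d + z • ((C ∘L Ring.inverse (1 - z • A)) ∘L B)) := fun z hz =>
    (isUnit_and_inverse_realization hd C B A hz.1 hz.2).1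
  have hdiff : ∀ z ∈ {z : ℂ | IsUnit (1 - z • A)} ∩ {z : ℂ | IsUnit (1 - z • A')},
      DifferentiableAt ℂ (fun z : ℂ => d + z • ((C ∘L Ring.inverse (1 - z • A)) ∘L B)) z := by
    intro z hz
    have hinner : DifferentiableAt ℂ (fun z : ℂ => 1 - z • A) z := by fun_prop
    have hinv : DifferentiableAt ℂ (fun z : ℂ => Ring.inverse (1 - z • A)) z :=
      DifferentiableAt.comp z (g := Ring.inverse) (differentiableAt_inverse hz.1) hinner
    have hcomp : DifferentiableAt ℂ (fun z : ℂ => (C ∘L Ring.inverse (1 - z • A)) ∘L B) z :=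
      ((differentiableAt_const C).clm_comp hinv).clm_comp (differentiableAt_const B)
    exact (differentiableAt_id.smul hcomp).const_add d
  refine ⟨_, hSopen, fun z hz => ?_, ?_, hunit, ?_⟩
  · rw [mem_closedBall_zero_iff] at hz
    exact ⟨isUnit_one_sub_smul_of_spectrum_subset_ball hA hz,
      isUnit_one_sub_smul_of_spectrum_subset_ball hA' hz⟩
  · exact DifferentiableOn.analyticOnNhd (fun z hz => (hdiff z hz).differentiableWithinAt) hSopen
  · refine DifferentiableOn.analyticOnNhd (fun z hz => ?_) hSopen
    exact (DifferentiableAt.comp z (g := Ring.inverse) (differentiableAt_inverse (hunit z hz))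
      (hdiff z hz)).differentiableWithinAt

/-- For `z ≠ 0`, the resolvents satisfy `(z - A)⁻¹ = z⁻¹ (1 - z⁻¹ A)⁻¹`. -/
theorem inverse_smul_one_sub {X : Type*} [NormedAddCommGroup X] [InnerProductSpace ℂ X]
    {A : X →L[ℂ] X} {z : ℂ} (hz : z ≠ 0) (hA : IsUnit (z • (1 : X →L[ℂ] X) - A)) :
    Ring.inverse (z • (1 : X →L[ℂ] X) - A) = z⁻¹ • Ring.inverse (1 - z⁻¹ • A) := by
  have hfac : 1 - z⁻¹ • A = z⁻¹ • (z • (1 : X →L[ℂ] X) - A) := by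
    rw [smul_sub, inv_smul_smul₀ hz]
  have hunit : IsUnit (1 - z⁻¹ • A) := by
    simpa only [hfac, Units.smul_mk0] using hA.smul (Units.mk0 z⁻¹ (inv_ne_zero hz))
  calc Ring.inverse (z • (1 : X →L[ℂ] X) - A)
      = Ring.inverse (z • (1 : X →L[ℂ] X) - A) * ((1 - z⁻¹ • A) * Ring.inverse (1 - z⁻¹ • A)) := by
        rw [Ring.mul_inverse_cancel _ hunit, mul_one]
    _ = z⁻¹ • Ring.inverse (1 - z⁻¹ • A) := by
        nth_rewrite 1 [hfac]
        rw [smul_mul_assoc, mul_smul_comm, ← mul_assoc, Ring.inverse_mul_cancel _ hA, one_mul]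

/-- The factorization of `R` induced by a solution `Q` of `βₘ° γₚ° = Q - αₘ Q αₚ`. -/
theorem Rfun_eq_mul (δ : U →L[ℂ] U) (γp : Xp →L[ℂ] U) (αp : Xp →L[ℂ] Xp) (βp : U →L[ℂ] Xp)
    (γm : Xm →L[ℂ] U) (αm : Xm →L[ℂ] Xm) (βm : U →L[ℂ] Xm) (Q : Xp →L[ℂ] Xm)
    (δm δp : U →L[ℂ] U) (hδ : δm * δp = δ - (γm ∘L Q) ∘L βp)
    (γpc : Xp →L[ℂ] U) (hγ : δm ∘L γpc = γp - (γm ∘L Q) ∘L αp)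
    (βmc : U →L[ℂ] Xm) (hβ : βmc ∘L δp = βm - (αm ∘L Q) ∘L βp)
    (hβγ : βmc ∘L γpc = Q - (αm ∘L Q) ∘L αp) {z : ℂ}
    (hp : IsUnit ((1 : Xp →L[ℂ] Xp) - z • αp)) (hm : IsUnit (z • (1 : Xm →L[ℂ] Xm) - αm)) :
    Rfun δ γp αp βp γm αm βm z =
      (δm + (γm ∘L Ring.inverse (z • (1 : Xm →L[ℂ] Xm) - αm)) ∘L βmc) *
        (δp + z • ((γpc ∘L Ring.inverse (1 - z • αp)) ∘L βp)) := by
  unfold Rfun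
  ext x
  have hδx : δm (δp x) = δ x - γm (Q (βp x)) := DFunLike.congr_fun hδ x
  have hγx : ∀ y, δm (γpc y) = γp y - γm (Q (αp y)) := DFunLike.congr_fun hγ
  have hβx : βmc (δp x) = βm x - αm (Q (βp x)) := DFunLike.congr_fun hβ x
  have hβγx : ∀ y, βmc (γpc y) = Q y - αm (Q (αp y)) := DFunLike.congr_fun hβγ
  set P := Ring.inverse (1 - z • αp)
  set M := Ring.inverse (z • (1 : Xm →L[ℂ] Xm) - αm)
  have hP : ∀ y, z • αp (P y) = P y - y := fun y => by
    have : P y - z • αp (P y) = y := DFunLike.congr_fun (Ring.mul_inverse_cancel _ hp) y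
    rw [eq_sub_iff_add_eq, add_comm]
    exact (sub_eq_iff_eq_add.mp this).symm
  have hM : ∀ y, z • M y = y + M (αm y) := fun y => by
    have : M (z • y - αm y) = y := DFunLike.congr_fun (Ring.inverse_mul_cancel _ hm) y
    rw [map_sub, map_smul] at this
    exact sub_eq_iff_eq_add.mp this
  have hQP : z • γm (Q (αp (P (βp x)))) = γm (Q (P (βp x))) - γm (Q (βp x)) := by
    simp only [← map_smul, hP, map_sub]
  have hMQ : z • γm (M (Q (P (βp x)))) =
      γm (Q (P (βp x))) + γm (M (αm (Q (P (βp x))))) := by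
    simp only [← map_smul γm, hM, map_add]
  have hMQP : z • γm (M (αm (Q (αp (P (βp x)))))) =
      γm (M (αm (Q (P (βp x))))) - γm (M (αm (Q (βp x)))) := by
    simp only [← map_smul, hP, map_sub]
  simp only [mul_def, add_apply, smul_apply, comp_apply, map_add, map_smul, map_sub, hδx,
    hγx, hβx, hβγx, smul_sub, hQP, hMQ, hMQP, smul_add]
  abel

/-- Given a stabilizing solution `Q` of the Riccati equation (R1) and a factorization
`δ₋δ₊ = δ − γ₋Qβ₊` with `δ₋, δ₊` invertible, the functions
`V₋(z) = δ₋ + γ₋(zI − α₋)⁻¹β₋°` and `V₊(z) = δ₊ + z·γ₊°(I − zα₊)⁻¹β₊` satisfy: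
(a) `R(z) = V₋(z)V₊(z)` wherever `I − zα₊` and `zI − α₋` are invertible, in particular on
the unit circle; (b) wherever `I − zα₊` and `I − zα₊°` are invertible, `V₊(z)` is
invertible with the stated inverse formula; (c) wherever `zI − α₋` and `zI − α₋°` are
invertible, `V₋(z)` is invertible with the stated inverse formula.  Consequently
`R = V₋V₊` is a right canonical Wiener–Hopf factorization of `R`. -/
theorem rightCanonicalWH_of_stabilizing_solution
    (δ : U →L[ℂ] U) (γp : Xp →L[ℂ] U) (αp : Xp →L[ℂ] Xp) (βp : U →L[ℂ] Xp)
    (γm : Xm →L[ℂ] U) (αm : Xm →L[ℂ] Xm) (βm : U →L[ℂ] Xm)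
    (hαp : spectrum ℂ αp ⊆ ball (0 : ℂ) 1) (hαm : spectrum ℂ αm ⊆ ball (0 : ℂ) 1)
    (Q : Xp →L[ℂ] Xm)
    (hQ : SolvesR1 δ γp αp βp γm αm βm Q) (hQs : StabilizingR1 δ γp αp βp γm αm βm Q)
    (δm δp : U →L[ℂ] U) (hδm : IsUnit δm) (hδp : IsUnit δp)
    (hδ : δm * δp = δ - (γm ∘L Q) ∘L βp)
    (γpc : Xp →L[ℂ] U) (hγpc : γpc = Ring.inverse δm ∘L (γp - (γm ∘L Q) ∘L αp))
    (βmc : U →L[ℂ] Xm) (hβmc : βmc = (βm - (αm ∘L Q) ∘L βp) ∘L Ring.inverse δp)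
    (Vm Vp : ℂ → (U →L[ℂ] U))
    (hVm : ∀ z : ℂ, Vm z = δm + (γm ∘L Ring.inverse (z • (1 : Xm →L[ℂ] Xm) - αm)) ∘L βmc)
    (hVp : ∀ z : ℂ, Vp z = δp + z • ((γpc ∘L Ring.inverse (1 - z • αp)) ∘L βp)) :
    -- (a) the factorization `R(z) = V₋(z)V₊(z)`
    (∀ z : ℂ, IsUnit ((1 : Xp →L[ℂ] Xp) - z • αp) →
      IsUnit (z • (1 : Xm →L[ℂ] Xm) - αm) →
      Rfun δ γp αp βp γm αm βm z = Vm z * Vp z) ∧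
    -- (a) in particular, for all `z` on the unit circle
    (∀ z : ℂ, ‖z‖ = 1 → Rfun δ γp αp βp γm αm βm z = Vm z * Vp z) ∧
    -- (b) invertibility of `V₊(z)` and the formula for its inverse
    (∀ z : ℂ, IsUnit ((1 : Xp →L[ℂ] Xp) - z • αp) →
      IsUnit ((1 : Xp →L[ℂ] Xp) - z • alphaPcirc δ γp αp βp γm Q) →
      IsUnit (Vp z) ∧
        Ring.inverse (Vp z) = Ring.inverse δp -
          z • (((Ring.inverse δp ∘L γpc) ∘L
            Ring.inverse (1 - z • alphaPcirc δ γp αp βp γm Q)) ∘L (βp ∘L Ring.inverse δp))) ∧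
    -- (c) invertibility of `V₋(z)` and the formula for its inverse
    (∀ z : ℂ, IsUnit (z • (1 : Xm →L[ℂ] Xm) - αm) →
      IsUnit (z • (1 : Xm →L[ℂ] Xm) - alphaMcirc δ βp γm αm βm Q) →
      IsUnit (Vm z) ∧
        Ring.inverse (Vm z) = Ring.inverse δm -
          ((Ring.inverse δm ∘L γm) ∘L
            Ring.inverse (z • (1 : Xm →L[ℂ] Xm) - alphaMcirc δ βp γm αm βm Q)) ∘L
              (βmc ∘L Ring.inverse δm)) ∧
    -- consequently, `R = V₋V₊` is a right canonical Wiener–Hopf factorization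
    MinusFactor Vm ∧ PlusFactor Vp ∧ RightCanonicalWH (Rfun δ γp αp βp γm αm βm) := by
  have hmm : Ring.inverse δm * δm = 1 := Ring.inverse_mul_cancel _ hδm
  have hmm' : δm * Ring.inverse δm = 1 := Ring.mul_inverse_cancel _ hδm
  have hpp : Ring.inverse δp * δp = 1 := Ring.inverse_mul_cancel _ hδp
  have hD : Ring.inverse (δ - (γm ∘L Q) ∘L βp) = Ring.inverse δp ∘L Ring.inverse δm := by
    obtain ⟨u, rfl⟩ := hδm
    obtain ⟨v, rfl⟩ := hδp
    rw [← hδ, ← Units.val_mul, Ring.inverse_unit, Ring.inverse_unit, Ring.inverse_unit, mul_inv_rev,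
      Units.val_mul]
    rfl
  have hγ : δm ∘L γpc = γp - (γm ∘L Q) ∘L αp := by
    rw [hγpc, ← comp_assoc, ← mul_def, hmm', one_def, id_comp]
  have hβ : βmc ∘L δp = βm - (αm ∘L Q) ∘L βp := by
    rw [hβmc, comp_assoc, ← mul_def, hpp, one_def, comp_id]
  have hβγ : βmc ∘L γpc = Q - (αm ∘L Q) ∘L αp := by
    rw [eq_sub_iff_add_eq']
    refine Eq.trans ?_ hQ.2.symm
    rw [hD, hβmc, hγpc]
    rfl
  have hαpc : alphaPcirc δ γp αp βp γm Q = αp - (βp ∘L Ring.inverse δp) ∘L γpc := by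
    rw [alphaPcirc, hD, hγpc]
    rfl
  have hαmc : alphaMcirc δ βp γm αm βm Q = αm - (βmc ∘L Ring.inverse δm) ∘L γm := by
    rw [alphaMcirc, hD, hβmc]
    rfl
  obtain ⟨hsp, hsm⟩ := hQs
  have hfac : ∀ z : ℂ, IsUnit ((1 : Xp →L[ℂ] Xp) - z • αp) →
      IsUnit (z • (1 : Xm →L[ℂ] Xm) - αm) →
      Rfun δ γp αp βp γm αm βm z = Vm z * Vp z := fun z hp hm => by
    rw [hVm, hVp]
    exact Rfun_eq_mul δ γp αp βp γm αm βm Q δm δp hδ γpc hγ βmc hβ hβγ hp hm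
  have hcirc : ∀ z : ℂ, ‖z‖ = 1 → Rfun δ γp αp βp γm αm βm z = Vm z * Vp z := fun z hz =>
    hfac z (isUnit_one_sub_smul_of_spectrum_subset_ball hαp hz.le)
      (isUnit_smul_one_sub_of_spectrum_subset_ball hαm hz.ge)
  have hplus : PlusFactor Vp := by
    rw [funext hVp]
    exact plusFactor_realization hδp γpc βp αp hαp (hαpc ▸ hsp)
  have hminus : MinusFactor Vm := by
    refine ⟨_, plusFactor_realization hδm γm βmc αm hαm (hαmc ▸ hsm), fun z hz => ?_⟩
    have hz0 : z ≠ 0 := norm_pos_iff.mp (zero_lt_one.trans_le hz)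
    rw [hVm, inverse_smul_one_sub hz0 (isUnit_smul_one_sub_of_spectrum_subset_ball hαm hz),
      comp_smul, smul_comp]
  refine ⟨hfac, hcirc, fun z hp hp' => ?_, fun z hm hm' => ?_, hminus, hplus,
    Vm, Vp, hminus, hplus, hcirc⟩
  · rw [hVp]
    rw [hαpc] at hp' ⊢
    exact isUnit_and_inverse_realization hδp γpc βp αp hp hp'
  · rw [hVm]
    exact isUnit_and_inverse_add_comp_inverse_comp δm γm βmc _ _ hδm hm hm' (by rw [hαmc]; abel)
end
end

section
/- There exists at most one stabilizing solution of the Riccati equation (R1): if Q₁, Q₂ ∈ B(X₊, X₋) are both stabilizing solutions of (R1), then Q₁ = Q₂. -/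
open Metric ContinuousLinearMap

noncomputable section

variable {U Xp Xm : Type*}
  [NormedAddCommGroup U] [InnerProductSpace ℂ U] [CompleteSpace U]
  [NormedAddCommGroup Xp] [InnerProductSpace ℂ Xp] [CompleteSpace Xp]
  [NormedAddCommGroup Xm] [InnerProductSpace ℂ Xm] [CompleteSpace Xm]

open Filter Topology

/-- In a complex Banach algebra, the powers of an element whose spectrum lies in the open unit
disc tend to zero. -/
theorem tendsto_pow_zero_of_spectrum_subset_ball {A : Type*} [NormedRing A] [NormedAlgebra ℂ A]
    [CompleteSpace A] {a : A} (ha : spectrum ℂ a ⊆ ball (0 : ℂ) 1) :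
    Tendsto (fun n : ℕ => a ^ n) atTop (𝓝 0) := by
  nontriviality A
  have hr : spectralRadius ℂ a < 1 := by
    have h := spectrum.spectralRadius_lt_of_forall_lt a (r := 1) fun z hz => by
      have hz' := ha hz
      rw [mem_ball_zero_iff] at hz'
      exact_mod_cast hz'
    simpa using h
  obtain ⟨r, hr₁, hr₂⟩ := ENNReal.lt_iff_exists_nnreal_btwn.1 hr
  have hr₂' : r < 1 := by exact_mod_cast hr₂
  have hbound : ∀ᶠ n : ℕ in atTop, ‖a ^ n‖ ≤ (r : ℝ) ^ n := by
    filter_upwards [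
      (spectrum.pow_nnnorm_pow_one_div_tendsto_nhds_spectralRadius a).eventually_lt_const
      hr₁, eventually_gt_atTop 0] with n hn hpos
    have hn0 : (0 : ℝ) < n := by exact_mod_cast hpos
    have h := (ENNReal.rpow_lt_rpow hn hn0).le
    rw [← ENNReal.rpow_mul, one_div, inv_mul_cancel₀ hn0.ne', ENNReal.rpow_one,
      ENNReal.rpow_natCast] at h
    exact_mod_cast h
  exact squeeze_zero_norm' hbound (tendsto_pow_atTop_nhds_zero_of_lt_one r.2 hr₂')

/-- A fixed point `T` of `T ↦ a T b` vanishes if `a` and `b` have spectrum in the open unit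
disc. -/
theorem eq_zero_of_eq_comp_comp {E F : Type*}
    [NormedAddCommGroup E] [NormedSpace ℂ E] [CompleteSpace E]
    [NormedAddCommGroup F] [NormedSpace ℂ F] [CompleteSpace F]
    {a : F →L[ℂ] F} {b : E →L[ℂ] E} {T : E →L[ℂ] F}
    (ha : spectrum ℂ a ⊆ ball (0 : ℂ) 1) (hb : spectrum ℂ b ⊆ ball (0 : ℂ) 1)
    (hT : T = (a ∘L T) ∘L b) : T = 0 := by
  have hpow : ∀ n : ℕ, ((a ^ n) ∘L T) ∘L (b ^ n) = T := by
    intro n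
    induction n with
    | zero => ext x; simp
    | succ n ih =>
      calc ((a ^ (n + 1)) ∘L T) ∘L (b ^ (n + 1)) = ((a ^ n) ∘L ((a ∘L T) ∘L b)) ∘L (b ^ n) := by
            rw [pow_succ, pow_succ']; rfl
        _ = T := by rw [← hT, ih]
  have hlim : Tendsto (fun n : ℕ => ((a ^ n) ∘L T) ∘L (b ^ n)) atTop (𝓝 ((0 ∘L T) ∘L 0)) :=
    (isBoundedBilinearMap_comp.continuous.tendsto _).comp
      (((isBoundedBilinearMap_comp.continuous.tendsto _).comp
        ((tendsto_pow_zero_of_spectrum_subset_ball ha).prodMk_nhds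
          (tendsto_const_nhds (x := T)))).prodMk_nhds (tendsto_pow_zero_of_spectrum_subset_ball hb))
  simp only [hpow, comp_zero] at hlim
  exact tendsto_nhds_unique tendsto_const_nhds hlim

/-- The difference of two solutions of (R1) satisfies
`Q₁ - Q₂ = α₋°(Q₁) (Q₁ - Q₂) α₊°(Q₂)`. -/
theorem SolvesR1.sub_eq_alphaMcirc_comp_sub_comp_alphaPcirc
    {δ : U →L[ℂ] U} {γp : Xp →L[ℂ] U} {αp : Xp →L[ℂ] Xp} {βp : U →L[ℂ] Xp}
    {γm : Xm →L[ℂ] U} {αm : Xm →L[ℂ] Xm} {βm : U →L[ℂ] Xm} {Q₁ Q₂ : Xp →L[ℂ] Xm}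
    (h₁ : SolvesR1 δ γp αp βp γm αm βm Q₁) (h₂ : SolvesR1 δ γp αp βp γm αm βm Q₂) :
    Q₁ - Q₂ = (alphaMcirc δ βp γm αm βm Q₁ ∘L (Q₁ - Q₂)) ∘L alphaPcirc δ γp αp βp γm Q₂ := by
  obtain ⟨hu₁, hQ₁⟩ := h₁
  obtain ⟨hu₂, hQ₂⟩ := h₂
  have hinv₁ := Ring.inverse_mul_cancel _ hu₁
  have hinv₂ := Ring.mul_inverse_cancel _ hu₂
  unfold alphaMcirc alphaPcirc
  generalize Ring.inverse (δ - (γm ∘L Q₁) ∘L βp) = R₁ at *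
  generalize Ring.inverse (δ - (γm ∘L Q₂) ∘L βp) = R₂ at *
  ext x
  have e₁ := DFunLike.congr_fun hQ₁ x
  have e₂ := DFunLike.congr_fun hQ₂ x
  have e₃ := congrArg (βm - (αm ∘L Q₁) ∘L βp)
    (DFunLike.congr_fun hinv₁ (R₂ ((γp - (γm ∘L Q₂) ∘L αp) x)))
  have e₄ := congrArg (fun u => (βm - (αm ∘L Q₁) ∘L βp) (R₁ u))
    (DFunLike.congr_fun hinv₂ ((γp - (γm ∘L Q₂) ∘L αp) x))
  clear hu₁ hu₂ hQ₁ hQ₂ hinv₁ hinv₂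
  simp only [add_apply, sub_apply, comp_apply, mul_def, one_def, id_apply, map_sub] at *
  linear_combination (norm := module) e₁ - e₂ + e₃ - e₄

/-- There is at most one stabilizing solution of the Riccati equation (R1). -/
theorem stabilizing_solution_unique
    (δ : U →L[ℂ] U) (γp : Xp →L[ℂ] U) (αp : Xp →L[ℂ] Xp) (βp : U →L[ℂ] Xp)
    (γm : Xm →L[ℂ] U) (αm : Xm →L[ℂ] Xm) (βm : U →L[ℂ] Xm)
    (hαp : spectrum ℂ αp ⊆ ball (0 : ℂ) 1) (hαm : spectrum ℂ αm ⊆ ball (0 : ℂ) 1)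
    (Q₁ Q₂ : Xp →L[ℂ] Xm)
    (h₁ : SolvesR1 δ γp αp βp γm αm βm Q₁) (h₁s : StabilizingR1 δ γp αp βp γm αm βm Q₁)
    (h₂ : SolvesR1 δ γp αp βp γm αm βm Q₂) (h₂s : StabilizingR1 δ γp αp βp γm αm βm Q₂) :
    Q₁ = Q₂ := by
  exact sub_eq_zero.1 (eq_zero_of_eq_comp_comp h₁s.2 h₂s.1
    (h₁.sub_eq_alphaMcirc_comp_sub_comp_alphaPcirc h₂))
end
end

section
/- Assume α₋ is invertible. Define, on the Hilbert space X := X₋ ⊕ X₊, the block operators A := diag(α₋⁻¹, α₊), B := column(α₋⁻¹β₋, β₊) ∈ B(U, X), C := row(−γ₋α₋⁻¹, γ₊) ∈ B(X, U), and D := δ − γ₋α₋⁻¹β₋ ∈ B(U). Then for every z ∈ ℂ such that zI − α₋ and I − zα₊ are invertible, the operator I − zA is invertible and D + zC(I − zA)⁻¹B = δ + z·γ₊(I − zα₊)⁻¹β₊ + γ₋(zI − α₋)⁻¹β₋; in particular, the stable representation R(z) coincides with the transfer function of the dichotomous system determined by (A, B, C, D), and R has no pole at 0. -/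
open Metric ContinuousLinearMap

noncomputable section

variable {U Xp Xm : Type*}
  [NormedAddCommGroup U] [InnerProductSpace ℂ U] [CompleteSpace U]
  [NormedAddCommGroup Xp] [InnerProductSpace ℂ Xp] [CompleteSpace Xp]
  [NormedAddCommGroup Xm] [InnerProductSpace ℂ Xm] [CompleteSpace Xm]

/-- A block diagonal operator with invertible blocks is invertible, and its inverse is the block
diagonal operator of the inverses. -/
theorem isUnit_prodMap_and_inverse_prodMap {E F : Type*}
    [NormedAddCommGroup E] [NormedSpace ℂ E] [NormedAddCommGroup F] [NormedSpace ℂ F]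
    {S : E →L[ℂ] E} {T : F →L[ℂ] F} (hS : IsUnit S) (hT : IsUnit T) :
    IsUnit (S.prodMap T) ∧
      Ring.inverse (S.prodMap T) = (Ring.inverse S).prodMap (Ring.inverse T) := by
  obtain ⟨s, rfl⟩ := hS
  obtain ⟨t, rfl⟩ := hT
  let u : ((E × F) →L[ℂ] (E × F))ˣ :=
    { val := (s : E →L[ℂ] E).prodMap (t : F →L[ℂ] F)
      inv := (↑s⁻¹ : E →L[ℂ] E).prodMap (↑t⁻¹ : F →L[ℂ] F)
      val_inv := by
        have hs (x : E) : (s : E →L[ℂ] E) ((↑s⁻¹ : E →L[ℂ] E) x) = x :=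
          DFunLike.congr_fun s.mul_inv x
        have ht (x : F) : (t : F →L[ℂ] F) ((↑t⁻¹ : F →L[ℂ] F) x) = x :=
          DFunLike.congr_fun t.mul_inv x
        ext x <;> simp [hs, ht]
      inv_val := by
        have hs (x : E) : (↑s⁻¹ : E →L[ℂ] E) ((s : E →L[ℂ] E) x) = x :=
          DFunLike.congr_fun s.inv_mul x
        have ht (x : F) : (↑t⁻¹ : F →L[ℂ] F) ((t : F →L[ℂ] F) x) = x :=
          DFunLike.congr_fun t.inv_mul x
        ext x <;> simp [hs, ht] }
  refine ⟨u.isUnit, ?_⟩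
  rw [Ring.inverse_unit, Ring.inverse_unit]
  exact Ring.inverse_unit u

/-- For `a` and `z - a` invertible, `1 - z a⁻¹` is invertible with inverse `-a (z - a)⁻¹`. -/
theorem isUnit_one_sub_smul_inverse_and_inverse {R : Type*} [Ring R] [Algebra ℂ R] {a : R} {z : ℂ}
    (ha : IsUnit a) (hz : IsUnit (z • (1 : R) - a)) :
    IsUnit (1 - z • Ring.inverse a) ∧
      Ring.inverse (1 - z • Ring.inverse a) = -(a * Ring.inverse (z • (1 : R) - a)) := by
  obtain ⟨u, rfl⟩ := ha
  obtain ⟨v, hv⟩ := hz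
  have key : 1 - z • Ring.inverse (u : R) = ((-(v * u⁻¹) : Rˣ) : R) := by
    simp [hv, sub_mul]
  rw [key, ← hv, Ring.inverse_unit, Ring.inverse_unit]
  exact ⟨Units.isUnit _, by simp [inv_neg]⟩

/-- Resolvent identity `z (z - a)⁻¹ a⁻¹ - a⁻¹ = (z - a)⁻¹`. -/
theorem smul_inverse_mul_inverse_sub_inverse {R : Type*} [Ring R] [Algebra ℂ R] {a : R} {z : ℂ}
    (ha : IsUnit a) (hz : IsUnit (z • (1 : R) - a)) :
    z • (Ring.inverse (z • (1 : R) - a) * Ring.inverse a) - Ring.inverse a =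
      Ring.inverse (z • (1 : R) - a) := by
  have h₁ := Ring.inverse_mul_cancel _ hz
  have h₂ := Ring.mul_inverse_cancel _ ha
  generalize Ring.inverse (z • (1 : R) - a) = p at *
  generalize Ring.inverse a = s at *
  calc z • (p * s) - s = z • (p * s) - p * (z • (1 : R) - a) * s := by rw [h₁, one_mul]
    _ = p * (a * s) := by simp [mul_sub, sub_mul, mul_assoc]
    _ = p := by rw [h₂, mul_one]

/-- If `α₋` is invertible, then the stable representation `R(z)` coincides with the
transfer function `D + zC(I − zA)⁻¹B` of the dichotomous system determined by
`A = diag(α₋⁻¹, α₊)`, `B = col(α₋⁻¹β₋, β₊)`, `C = row(−γ₋α₋⁻¹, γ₊)`,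
`D = δ − γ₋α₋⁻¹β₋`, wherever `zI − α₋` and `I − zα₊` are invertible; in particular
`I − zA` is then invertible.  (In particular, `R` has no pole at `0`.) -/
theorem stableRepresentation_eq_dichotomous_transfer
    (δ : U →L[ℂ] U) (γp : Xp →L[ℂ] U) (αp : Xp →L[ℂ] Xp) (βp : U →L[ℂ] Xp)
    (γm : Xm →L[ℂ] U) (αm : Xm →L[ℂ] Xm) (βm : U →L[ℂ] Xm)
    (hαp : spectrum ℂ αp ⊆ ball (0 : ℂ) 1) (hαm : spectrum ℂ αm ⊆ ball (0 : ℂ) 1)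
    (hαmUnit : IsUnit αm)
    (A : (Xm × Xp) →L[ℂ] (Xm × Xp)) (hA : A = (Ring.inverse αm).prodMap αp)
    (B : U →L[ℂ] (Xm × Xp)) (hB : B = (Ring.inverse αm ∘L βm).prod βp)
    (C : (Xm × Xp) →L[ℂ] U) (hC : C = (-(γm ∘L Ring.inverse αm)).coprod γp)
    (D : U →L[ℂ] U) (hDdef : D = δ - (γm ∘L Ring.inverse αm) ∘L βm) :
    ∀ z : ℂ, IsUnit (z • (1 : Xm →L[ℂ] Xm) - αm) → IsUnit ((1 : Xp →L[ℂ] Xp) - z • αp) →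
      IsUnit ((1 : (Xm × Xp) →L[ℂ] (Xm × Xp)) - z • A) ∧
      D + z • ((C ∘L Ring.inverse (1 - z • A)) ∘L B) = Rfun δ γp αp βp γm αm βm z := by
  intro z hzm hzp
  subst hA hB hC hDdef
  obtain ⟨hum, him⟩ := isUnit_one_sub_smul_inverse_and_inverse hαmUnit hzm
  obtain ⟨hu, hi⟩ := isUnit_prodMap_and_inverse_prodMap hum hzp
  have hblock : (1 : (Xm × Xp) →L[ℂ] (Xm × Xp)) - z • (Ring.inverse αm).prodMap αp =
      (1 - z • Ring.inverse αm).prodMap (1 - z • αp) := by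
    ext x <;> simp
  rw [hblock]
  refine ⟨hu, ?_⟩
  rw [hi, him, Rfun]
  ext x
  have hcancel (y : Xm) : Ring.inverse αm (αm y) = y :=
    DFunLike.congr_fun (Ring.inverse_mul_cancel _ hαmUnit) y
  have hres := congrArg γm
    (DFunLike.congr_fun (smul_inverse_mul_inverse_sub_inverse hαmUnit hzm) (βm x))
  simp only [sub_apply, smul_apply, mul_apply_eq_comp, map_sub, map_smul] at hres
  simp [hcancel, ← hres]
  abel
end
end

section
/- Assume α₋ is invertible. If R(0) = δ − γ₋α₋⁻¹β₋ is invertible, then for every Q ∈ B(X₊, X₋) such that δ − γ₋Qβ₊ is invertible, the operator α₋° := α₋ − (β₋ − α₋Qβ₊)(δ − γ₋Qβ₊)⁻¹γ₋ is invertible, with inverse (α₋°)⁻¹ = α₋⁻¹ + α₋⁻¹(β₋ − α₋Qβ₊)(δ − γ₋α₋⁻¹β₋)⁻¹γ₋α₋⁻¹. -/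
open Metric ContinuousLinearMap

noncomputable section

variable {U Xp Xm : Type*}
  [NormedAddCommGroup U] [InnerProductSpace ℂ U] [CompleteSpace U]
  [NormedAddCommGroup Xp] [InnerProductSpace ℂ Xp] [CompleteSpace Xp]
  [NormedAddCommGroup Xm] [InnerProductSpace ℂ Xm] [CompleteSpace Xm]

/-- The Woodbury identity for continuous linear maps: if `a`, `d` and the Schur complement
`d - c a⁻¹ b` are invertible, then so is `a - b d⁻¹ c`, with inverse
`a⁻¹ + a⁻¹ b (d - c a⁻¹ b)⁻¹ c a⁻¹`. -/
theorem isUnit_and_inverse_sub_comp_inverse_comp {𝕜 E F : Type*} [NontriviallyNormedField 𝕜]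
    [NormedAddCommGroup E] [NormedSpace 𝕜 E] [NormedAddCommGroup F] [NormedSpace 𝕜 F]
    {a : E →L[𝕜] E} {b : F →L[𝕜] E} {c : E →L[𝕜] F} {d : F →L[𝕜] F} (ha : IsUnit a)
    (hd : IsUnit d) (hs : IsUnit (d - (c ∘L Ring.inverse a) ∘L b)) :
    IsUnit (a - (b ∘L Ring.inverse d) ∘L c) ∧
      Ring.inverse (a - (b ∘L Ring.inverse d) ∘L c) =
        Ring.inverse a +
          ((Ring.inverse a ∘L b) ∘L Ring.inverse (d - (c ∘L Ring.inverse a) ∘L b)) ∘L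
            (c ∘L Ring.inverse a) := by
  have ha₁ (x : E) : a (Ring.inverse a x) = x :=
    DFunLike.congr_fun (Ring.mul_inverse_cancel a ha) x
  have ha₂ (x : E) : Ring.inverse a (a x) = x :=
    DFunLike.congr_fun (Ring.inverse_mul_cancel a ha) x
  have hd₁ (u : F) : d (Ring.inverse d u) = u :=
    DFunLike.congr_fun (Ring.mul_inverse_cancel d hd) u
  have hd₂ (u : F) : Ring.inverse d (d u) = u :=
    DFunLike.congr_fun (Ring.inverse_mul_cancel d hd) u
  have hs₁ (u : F) := DFunLike.congr_fun (Ring.mul_inverse_cancel _ hs) u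
  have hs₂ (u : F) := DFunLike.congr_fun (Ring.inverse_mul_cancel _ hs) u
  generalize Ring.inverse (d - (c ∘L Ring.inverse a) ∘L b) = s at hs₁ hs₂ ⊢
  replace hs₁ (u : F) : c (Ring.inverse a (b (s u))) = d (s u) - u :=
    eq_sub_of_add_eq' (sub_eq_iff_eq_add.mp (hs₁ u)).symm
  replace hs₂ (u : F) : s (c (Ring.inverse a (b u))) = s (d u) - u :=
    eq_sub_of_add_eq' (sub_eq_iff_eq_add.mp ((map_sub s _ _).symm.trans (hs₂ u))).symm
  let w : (E →L[𝕜] E)ˣ :=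
    { val := a - (b ∘L Ring.inverse d) ∘L c
      inv := Ring.inverse a + ((Ring.inverse a ∘L b) ∘L s) ∘L (c ∘L Ring.inverse a)
      val_inv := by
        ext x
        simp [ha₁, hd₂, hs₁]
      inv_val := by
        ext x
        simp [ha₂, hd₁, hs₂] }
  exact ⟨w.isUnit, Ring.inverse_unit w⟩

/-- If `α₋` and `R(0) = δ − γ₋α₋⁻¹β₋` are invertible, then for every `Q` with
`δ − γ₋Qβ₊` invertible, `α₋° = α₋ − (β₋ − α₋Qβ₊)(δ − γ₋Qβ₊)⁻¹γ₋` is invertible with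
`(α₋°)⁻¹ = α₋⁻¹ + α₋⁻¹(β₋ − α₋Qβ₊)(δ − γ₋α₋⁻¹β₋)⁻¹γ₋α₋⁻¹`. -/
theorem alphaMcirc_invertible_of_R0_invertible
    (δ : U →L[ℂ] U) (γp : Xp →L[ℂ] U) (αp : Xp →L[ℂ] Xp) (βp : U →L[ℂ] Xp)
    (γm : Xm →L[ℂ] U) (αm : Xm →L[ℂ] Xm) (βm : U →L[ℂ] Xm)
    (hαp : spectrum ℂ αp ⊆ ball (0 : ℂ) 1) (hαm : spectrum ℂ αm ⊆ ball (0 : ℂ) 1)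
    (hαmUnit : IsUnit αm)
    (hR0 : IsUnit (δ - (γm ∘L Ring.inverse αm) ∘L βm)) :
    ∀ Q : Xp →L[ℂ] Xm, IsUnit (δ - (γm ∘L Q) ∘L βp) →
      IsUnit (αm - ((βm - (αm ∘L Q) ∘L βp) ∘L Ring.inverse (δ - (γm ∘L Q) ∘L βp)) ∘L γm) ∧
      Ring.inverse
          (αm - ((βm - (αm ∘L Q) ∘L βp) ∘L Ring.inverse (δ - (γm ∘L Q) ∘L βp)) ∘L γm) =
        Ring.inverse αm +
          ((Ring.inverse αm ∘L (βm - (αm ∘L Q) ∘L βp)) ∘L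
            Ring.inverse (δ - (γm ∘L Ring.inverse αm) ∘L βm)) ∘L
              (γm ∘L Ring.inverse αm) := by
  intro Q hQ
  have hs : δ - (γm ∘L Q) ∘L βp - (γm ∘L Ring.inverse αm) ∘L (βm - (αm ∘L Q) ∘L βp) =
      δ - (γm ∘L Ring.inverse αm) ∘L βm := by
    ext u
    have hα (x : Xm) : Ring.inverse αm (αm x) = x :=
      DFunLike.congr_fun (Ring.inverse_mul_cancel αm hαmUnit) x
    simp [hα]
  have h := isUnit_and_inverse_sub_comp_inverse_comp hαmUnit hQ (hs ▸ hR0)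
  rwa [hs] at h
end
end

section
/- Assume α₋ is invertible. If there exists a Q ∈ B(X₊, X₋) such that both δ − γ₋Qβ₊ and α₋° := α₋ − (β₋ − α₋Qβ₊)(δ − γ₋Qβ₊)⁻¹γ₋ are invertible, then R(0) = δ − γ₋α₋⁻¹β₋ is invertible. -/
open Metric ContinuousLinearMap

noncomputable section

variable {U Xp Xm : Type*}
  [NormedAddCommGroup U] [InnerProductSpace ℂ U] [CompleteSpace U]
  [NormedAddCommGroup Xp] [InnerProductSpace ℂ Xp] [CompleteSpace Xp]
  [NormedAddCommGroup Xm] [InnerProductSpace ℂ Xm] [CompleteSpace Xm]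

theorem inverse_apply_self {𝕜 V : Type*} [NontriviallyNormedField 𝕜]
    [NormedAddCommGroup V] [NormedSpace 𝕜 V] {T : V →L[𝕜] V} (hT : IsUnit T) (x : V) :
    Ring.inverse T (T x) = x :=
  DFunLike.congr_fun (Ring.inverse_mul_cancel T hT) x

theorem apply_inverse_self {𝕜 V : Type*} [NontriviallyNormedField 𝕜]
    [NormedAddCommGroup V] [NormedSpace 𝕜 V] {T : V →L[𝕜] V} (hT : IsUnit T) (x : V) :
    T (Ring.inverse T x) = x :=
  DFunLike.congr_fun (Ring.mul_inverse_cancel T hT) x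

/-- If the diagonal entries `A`, `D` of a block operator are invertible, then invertibility of the
Schur complement of `D` implies invertibility of the Schur complement of `A`. -/
theorem isUnit_schurComplement_of_isUnit_schurComplement
    {𝕜 V W : Type*} [NontriviallyNormedField 𝕜]
    [NormedAddCommGroup V] [NormedSpace 𝕜 V] [NormedAddCommGroup W] [NormedSpace 𝕜 W]
    {A : W →L[𝕜] W} {B : V →L[𝕜] W} {C : W →L[𝕜] V} {D : V →L[𝕜] V}
    (hA : IsUnit A) (hD : IsUnit D) (hE : IsUnit (A - (B ∘L Ring.inverse D) ∘L C)) :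
    IsUnit (D - (C ∘L Ring.inverse A) ∘L B) := by
  set E := A - (B ∘L Ring.inverse D) ∘L C
  have E_apply (w : W) : E w = A w - B (Ring.inverse D (C w)) := rfl
  refine isUnit_iff_exists.2
    ⟨Ring.inverse D + Ring.inverse D ∘L C ∘L Ring.inverse E ∘L B ∘L Ring.inverse D, ?_, ?_⟩
  · ext x
    have hw := apply_inverse_self hE (B (Ring.inverse D x))
    rw [E_apply] at hw
    set w := Ring.inverse E (B (Ring.inverse D x))
    have hC : C w = C (Ring.inverse A (B (Ring.inverse D x))) +
        C (Ring.inverse A (B (Ring.inverse D (C w)))) := by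
      rw [← map_add, ← map_add, ← hw, sub_add_cancel, inverse_apply_self hA]
    change D (Ring.inverse D x + Ring.inverse D (C w)) -
      C (Ring.inverse A (B (Ring.inverse D x + Ring.inverse D (C w)))) = x
    simp only [map_add, apply_inverse_self hD]
    rw [← hC, add_sub_cancel_right]
  · ext x
    have hw : B x - B (Ring.inverse D (C (Ring.inverse A (B x)))) = E (Ring.inverse A (B x)) := by
      rw [E_apply, apply_inverse_self hA]
    change Ring.inverse D (D x - C (Ring.inverse A (B x))) +
      Ring.inverse D (C (Ring.inverse E (B (Ring.inverse D (D x - C (Ring.inverse A (B x))))))) = x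
    rw [map_sub (Ring.inverse D), inverse_apply_self hD, map_sub B, hw, inverse_apply_self hE,
      sub_add_cancel]

/-- If `α₋` is invertible and there exists a `Q` such that both `δ − γ₋Qβ₊` and
`α₋° = α₋ − (β₋ − α₋Qβ₊)(δ − γ₋Qβ₊)⁻¹γ₋` are invertible, then
`R(0) = δ − γ₋α₋⁻¹β₋` is invertible. -/
theorem R0_invertible_of_exists_alphaMcirc_invertible
    (δ : U →L[ℂ] U) (γp : Xp →L[ℂ] U) (αp : Xp →L[ℂ] Xp) (βp : U →L[ℂ] Xp)
    (γm : Xm →L[ℂ] U) (αm : Xm →L[ℂ] Xm) (βm : U →L[ℂ] Xm)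
    (hαp : spectrum ℂ αp ⊆ ball (0 : ℂ) 1) (hαm : spectrum ℂ αm ⊆ ball (0 : ℂ) 1)
    (hαmUnit : IsUnit αm)
    (hex : ∃ Q : Xp →L[ℂ] Xm, IsUnit (δ - (γm ∘L Q) ∘L βp) ∧
      IsUnit (αm - ((βm - (αm ∘L Q) ∘L βp) ∘L Ring.inverse (δ - (γm ∘L Q) ∘L βp)) ∘L γm)) :
    IsUnit (δ - (γm ∘L Ring.inverse αm) ∘L βm) := by
  obtain ⟨Q, hD, hE⟩ := hex
  convert isUnit_schurComplement_of_isUnit_schurComplement hαmUnit hD hE using 1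
  ext x
  have hQ : Ring.inverse αm (αm (Q (βp x))) = Q (βp x) := inverse_apply_self hαmUnit _
  simp [hQ]
end
end

section
/- Assume α₋ is invertible. Then: (1) if there exists a Q ∈ B(X₊, X₋) such that δ − γ₋Qβ₊ is invertible but α₋° := α₋ − (β₋ − α₋Qβ₊)(δ − γ₋Qβ₊)⁻¹γ₋ is not invertible, then R(0) = δ − γ₋α₋⁻¹β₋ is not invertible; (2) if R(0) is not invertible, then for every Q ∈ B(X₊, X₋) with δ − γ₋Qβ₊ invertible, the operator α₋° := α₋ − (β₋ − α₋Qβ₊)(δ − γ₋Qβ₊)⁻¹γ₋ is not invertible. -/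
open Metric ContinuousLinearMap

noncomputable section

variable {U Xp Xm : Type*}
  [NormedAddCommGroup U] [InnerProductSpace ℂ U] [CompleteSpace U]
  [NormedAddCommGroup Xp] [InnerProductSpace ℂ Xp] [CompleteSpace Xp]
  [NormedAddCommGroup Xm] [InnerProductSpace ℂ Xm] [CompleteSpace Xm]

/-- If `A` and `D` are invertible and the Schur complement `D - C A⁻¹ B` is invertible, then so is
the Schur complement `A - B D⁻¹ C`. -/
theorem isUnit_schurComplement_of_isUnit {𝕜 E F : Type*} [NontriviallyNormedField 𝕜]
    [NormedAddCommGroup E] [NormedSpace 𝕜 E] [NormedAddCommGroup F] [NormedSpace 𝕜 F]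
    {A : E →L[𝕜] E} {B : F →L[𝕜] E} {C : E →L[𝕜] F} {D : F →L[𝕜] F}
    (hA : IsUnit A) (hD : IsUnit D) (hS : IsUnit (D - (C ∘L Ring.inverse A) ∘L B)) :
    IsUnit (A - (B ∘L Ring.inverse D) ∘L C) := by
  obtain ⟨T, hST, hTS⟩ := isUnit_iff_exists.mp hS
  have hA₁ (x : E) : A (Ring.inverse A x) = x :=
    DFunLike.congr_fun (Ring.mul_inverse_cancel A hA) x
  have hA₂ (x : E) : Ring.inverse A (A x) = x :=
    DFunLike.congr_fun (Ring.inverse_mul_cancel A hA) x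
  have hD₁ (y : F) : D (Ring.inverse D y) = y :=
    DFunLike.congr_fun (Ring.mul_inverse_cancel D hD) y
  have hD₂ (y : F) : Ring.inverse D (D y) = y :=
    DFunLike.congr_fun (Ring.inverse_mul_cancel D hD) y
  have hT₁ (y : F) : D (T y) - C (Ring.inverse A (B (T y))) = y := DFunLike.congr_fun hST y
  have hT₂ (y : F) : T (D y - C (Ring.inverse A (B y))) = y := DFunLike.congr_fun hTS y
  generalize Ring.inverse A = A' at *
  generalize Ring.inverse D = D' at *
  refine isUnit_iff_exists.mpr ⟨A' + A' ∘L B ∘L T ∘L C ∘L A', ?_, ?_⟩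
  · ext x
    set y := T (C (A' x)) with hy
    have hC : C (A' x) + C (A' (B y)) = D y := (sub_eq_iff_eq_add.mp (hT₁ (C (A' x)))).symm
    change A (A' x + A' (B y)) - B (D' (C (A' x + A' (B y)))) = x
    rw [map_add C, hC, hD₂, map_add, hA₁, hA₁, add_sub_cancel_right]
  · ext x
    set w := D' (C x) with hw
    have hC : C (A' (A x - B w)) = D w - C (A' (B w)) := by
      rw [map_sub, map_sub, hA₂, hw, hD₁]
    change A' (A x - B w) + A' (B (T (C (A' (A x - B w))))) = x
    rw [hC, hT₂, map_sub, hA₂, sub_add_cancel]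

/-- For invertible `A` and `D`, the two Schur complements `A - B D⁻¹ C` and `D - C A⁻¹ B` are
simultaneously invertible. -/
theorem isUnit_schurComplement_iff {𝕜 E F : Type*} [NontriviallyNormedField 𝕜]
    [NormedAddCommGroup E] [NormedSpace 𝕜 E] [NormedAddCommGroup F] [NormedSpace 𝕜 F]
    {A : E →L[𝕜] E} {B : F →L[𝕜] E} {C : E →L[𝕜] F} {D : F →L[𝕜] F}
    (hA : IsUnit A) (hD : IsUnit D) :
    IsUnit (A - (B ∘L Ring.inverse D) ∘L C) ↔ IsUnit (D - (C ∘L Ring.inverse A) ∘L B) :=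
  ⟨isUnit_schurComplement_of_isUnit hD hA, isUnit_schurComplement_of_isUnit hA hD⟩

/-- Assume `α₋` invertible. (1) If some `Q` has `δ − γ₋Qβ₊` invertible but
`α₋° = α₋ − (β₋ − α₋Qβ₊)(δ − γ₋Qβ₊)⁻¹γ₋` not invertible, then `R(0) = δ − γ₋α₋⁻¹β₋` is
not invertible. (2) If `R(0)` is not invertible, then for every `Q` with `δ − γ₋Qβ₊`
invertible, `α₋°` is not invertible. -/
theorem alphaMcirc_not_invertible_iff_R0_not_invertible
    (δ : U →L[ℂ] U) (γp : Xp →L[ℂ] U) (αp : Xp →L[ℂ] Xp) (βp : U →L[ℂ] Xp)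
    (γm : Xm →L[ℂ] U) (αm : Xm →L[ℂ] Xm) (βm : U →L[ℂ] Xm)
    (hαp : spectrum ℂ αp ⊆ ball (0 : ℂ) 1) (hαm : spectrum ℂ αm ⊆ ball (0 : ℂ) 1)
    (hαmUnit : IsUnit αm) :
    ((∃ Q : Xp →L[ℂ] Xm, IsUnit (δ - (γm ∘L Q) ∘L βp) ∧
        ¬ IsUnit (αm - ((βm - (αm ∘L Q) ∘L βp) ∘L
          Ring.inverse (δ - (γm ∘L Q) ∘L βp)) ∘L γm)) →
      ¬ IsUnit (δ - (γm ∘L Ring.inverse αm) ∘L βm)) ∧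
    (¬ IsUnit (δ - (γm ∘L Ring.inverse αm) ∘L βm) →
      ∀ Q : Xp →L[ℂ] Xm, IsUnit (δ - (γm ∘L Q) ∘L βp) →
        ¬ IsUnit (αm - ((βm - (αm ∘L Q) ∘L βp) ∘L
          Ring.inverse (δ - (γm ∘L Q) ∘L βp)) ∘L γm)) := by
  have key (Q : Xp →L[ℂ] Xm) (hQ : IsUnit (δ - (γm ∘L Q) ∘L βp)) :
      IsUnit (αm - ((βm - (αm ∘L Q) ∘L βp) ∘L
          Ring.inverse (δ - (γm ∘L Q) ∘L βp)) ∘L γm) ↔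
        IsUnit (δ - (γm ∘L Ring.inverse αm) ∘L βm) := by
    rw [isUnit_schurComplement_iff hαmUnit hQ]
    have hinv (x : Xm) : Ring.inverse αm (αm x) = x :=
      DFunLike.congr_fun (Ring.inverse_mul_cancel αm hαmUnit) x
    congr! 1
    ext u
    simp [hinv]
  exact ⟨fun ⟨Q, hQ, h⟩ h0 => h ((key Q hQ).mpr h0), fun h0 Q hQ h => h0 ((key Q hQ).mp h)⟩
end
end

section
/- Assume α₋ is invertible and R(0) = δ − γ₋α₋⁻¹β₋ is invertible. Let Q ∈ B(X₊, X₋). Then δ − γ₋Qβ₊ is invertible if and only if the operator α₋⁻¹ + α₋⁻¹(β₋ − α₋Qβ₊)(δ − γ₋α₋⁻¹β₋)⁻¹γ₋α₋⁻¹ is invertible; in that case, α₋° := α₋ − (β₋ − α₋Qβ₊)(δ − γ₋Qβ₊)⁻¹γ₋ is invertible with (α₋°)⁻¹ = α₋⁻¹ + α₋⁻¹(β₋ − α₋Qβ₊)(δ − γ₋α₋⁻¹β₋)⁻¹γ₋α₋⁻¹. -/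
open Metric ContinuousLinearMap

noncomputable section

variable {U Xp Xm : Type*}
  [NormedAddCommGroup U] [InnerProductSpace ℂ U] [CompleteSpace U]
  [NormedAddCommGroup Xp] [InnerProductSpace ℂ Xp] [CompleteSpace Xp]
  [NormedAddCommGroup Xm] [InnerProductSpace ℂ Xm] [CompleteSpace Xm]

/-- If `1 + S T` is invertible then so is `1 + T S`, for operators between different spaces. -/
theorem isUnit_one_add_comp_swap {E F : Type*}
    [NormedAddCommGroup E] [NormedSpace ℂ E] [NormedAddCommGroup F] [NormedSpace ℂ F]
    (S : E →L[ℂ] F) (T : F →L[ℂ] E) (h : IsUnit (1 + S ∘L T)) : IsUnit (1 + T ∘L S) := by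
  obtain ⟨k, hk, hk'⟩ := isUnit_iff_exists.1 h
  have e : ∀ x, S (T (k x)) = x - k x := fun x => by
    have := congr($hk x)
    simp at this
    exact eq_sub_of_add_eq' this
  have e' : ∀ x, k (S (T x)) = x - k x := fun x => by
    have := congr($hk' x)
    simp at this
    exact eq_sub_of_add_eq' this
  refine isUnit_iff_exists.2 ⟨1 - T ∘L k ∘L S, ?_, ?_⟩
  · ext x
    simp [e]
  · ext x
    simp [e']

theorem isUnit_one_add_comp_comm {E F : Type*}
    [NormedAddCommGroup E] [NormedSpace ℂ E] [NormedAddCommGroup F] [NormedSpace ℂ F]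
    (S : E →L[ℂ] F) (T : F →L[ℂ] E) : IsUnit (1 + S ∘L T) ↔ IsUnit (1 + T ∘L S) :=
  ⟨isUnit_one_add_comp_swap S T, isUnit_one_add_comp_swap T S⟩

/-- `R + C A⁻¹ B` is invertible iff `A⁻¹ + A⁻¹ B R⁻¹ C A⁻¹` is. -/
theorem isUnit_add_comp_iff {E F : Type*}
    [NormedAddCommGroup E] [NormedSpace ℂ E] [NormedAddCommGroup F] [NormedSpace ℂ F]
    {A : F →L[ℂ] F} {R : E →L[ℂ] E} (hA : IsUnit A) (hR : IsUnit R)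
    (B : E →L[ℂ] F) (C : F →L[ℂ] E) :
    IsUnit (R + C ∘L Ring.inverse A ∘L B) ↔
      IsUnit (Ring.inverse A +
        ((Ring.inverse A ∘L B) ∘L Ring.inverse R) ∘L (C ∘L Ring.inverse A)) := by
  have hD : R + C ∘L Ring.inverse A ∘L B =
      R * (1 + (Ring.inverse R ∘L C ∘L Ring.inverse A) ∘L B) := by
    ext x
    have e : ∀ x, R (Ring.inverse R x) = x := fun x => congr($(Ring.mul_inverse_cancel R hR) x)
    simp [e]
  have hW : Ring.inverse A +
        ((Ring.inverse A ∘L B) ∘L Ring.inverse R) ∘L (C ∘L Ring.inverse A) =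
      Ring.inverse A * (1 + B ∘L (Ring.inverse R ∘L C ∘L Ring.inverse A)) := by
    ext x
    simp
  rw [hD, hW, hR.mul_left_iff, hA.ringInverse.mul_left_iff, isUnit_one_add_comp_comm]

/-- The Woodbury identity for `A - B (R + C A⁻¹ B)⁻¹ C`. -/
theorem isUnit_and_inverse_sub_comp {E F : Type*}
    [NormedAddCommGroup E] [NormedSpace ℂ E] [NormedAddCommGroup F] [NormedSpace ℂ F]
    {A : F →L[ℂ] F} {R D : E →L[ℂ] E} (hA : IsUnit A) (hR : IsUnit R) (hD : IsUnit D)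
    {B : E →L[ℂ] F} {C : F →L[ℂ] E} (h : D = R + C ∘L Ring.inverse A ∘L B) :
    IsUnit (A - (B ∘L Ring.inverse D) ∘L C) ∧
      Ring.inverse (A - (B ∘L Ring.inverse D) ∘L C) = Ring.inverse A +
        ((Ring.inverse A ∘L B) ∘L Ring.inverse R) ∘L (C ∘L Ring.inverse A) := by
  have hCB : ∀ x, C (Ring.inverse A (B x)) = D x - R x := fun x => by simp [h]
  have hA₁ : ∀ x, A (Ring.inverse A x) = x := fun x => congr($(Ring.mul_inverse_cancel A hA) x)
  have hA₂ : ∀ x, Ring.inverse A (A x) = x := fun x => congr($(Ring.inverse_mul_cancel A hA) x)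
  have hR₁ : ∀ x, R (Ring.inverse R x) = x := fun x => congr($(Ring.mul_inverse_cancel R hR) x)
  have hR₂ : ∀ x, Ring.inverse R (R x) = x := fun x => congr($(Ring.inverse_mul_cancel R hR) x)
  have hD₁ : ∀ x, D (Ring.inverse D x) = x := fun x => congr($(Ring.mul_inverse_cancel D hD) x)
  have hD₂ : ∀ x, Ring.inverse D (D x) = x := fun x => congr($(Ring.inverse_mul_cancel D hD) x)
  have hleft : (A - (B ∘L Ring.inverse D) ∘L C) * (Ring.inverse A +
      ((Ring.inverse A ∘L B) ∘L Ring.inverse R) ∘L (C ∘L Ring.inverse A)) = 1 := by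
    ext x
    simp [hCB, hA₁, hR₁, hD₂]
  have hright : (Ring.inverse A +
      ((Ring.inverse A ∘L B) ∘L Ring.inverse R) ∘L (C ∘L Ring.inverse A)) *
      (A - (B ∘L Ring.inverse D) ∘L C) = 1 := by
    ext x
    simp [hCB, hA₂, hR₂, hD₁]
  exact ⟨isUnit_iff_exists.2 ⟨_, hleft, hright⟩, Ring.inverse_unit ⟨_, _, hleft, hright⟩⟩

/-- Assume `α₋` and `R(0) = δ − γ₋α₋⁻¹β₋` are invertible, and let `Q ∈ B(X₊, X₋)`.
Then `δ − γ₋Qβ₊` is invertible if and only if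
`α₋⁻¹ + α₋⁻¹(β₋ − α₋Qβ₊)(δ − γ₋α₋⁻¹β₋)⁻¹γ₋α₋⁻¹` is invertible; in that case
`α₋° = α₋ − (β₋ − α₋Qβ₊)(δ − γ₋Qβ₊)⁻¹γ₋` is invertible and its inverse is that
operator. -/
theorem deltaQ_invertible_iff
    (δ : U →L[ℂ] U) (γp : Xp →L[ℂ] U) (αp : Xp →L[ℂ] Xp) (βp : U →L[ℂ] Xp)
    (γm : Xm →L[ℂ] U) (αm : Xm →L[ℂ] Xm) (βm : U →L[ℂ] Xm)
    (hαp : spectrum ℂ αp ⊆ ball (0 : ℂ) 1) (hαm : spectrum ℂ αm ⊆ ball (0 : ℂ) 1)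
    (hαmUnit : IsUnit αm)
    (hR0 : IsUnit (δ - (γm ∘L Ring.inverse αm) ∘L βm))
    (Q : Xp →L[ℂ] Xm) :
    (IsUnit (δ - (γm ∘L Q) ∘L βp) ↔
      IsUnit (Ring.inverse αm +
        ((Ring.inverse αm ∘L (βm - (αm ∘L Q) ∘L βp)) ∘L
          Ring.inverse (δ - (γm ∘L Ring.inverse αm) ∘L βm)) ∘L
            (γm ∘L Ring.inverse αm))) ∧
    (IsUnit (δ - (γm ∘L Q) ∘L βp) →
      IsUnit (αm - ((βm - (αm ∘L Q) ∘L βp) ∘L Ring.inverse (δ - (γm ∘L Q) ∘L βp)) ∘L γm) ∧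
      Ring.inverse
          (αm - ((βm - (αm ∘L Q) ∘L βp) ∘L Ring.inverse (δ - (γm ∘L Q) ∘L βp)) ∘L γm) =
        Ring.inverse αm +
          ((Ring.inverse αm ∘L (βm - (αm ∘L Q) ∘L βp)) ∘L
            Ring.inverse (δ - (γm ∘L Ring.inverse αm) ∘L βm)) ∘L
              (γm ∘L Ring.inverse αm)) := by
  have hD : δ - (γm ∘L Q) ∘L βp = (δ - (γm ∘L Ring.inverse αm) ∘L βm) +
      γm ∘L Ring.inverse αm ∘L (βm - (αm ∘L Q) ∘L βp) := by
    ext x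
    have e : ∀ x, Ring.inverse αm (αm x) = x :=
      fun x => congr($(Ring.inverse_mul_cancel αm hαmUnit) x)
    simp [e]
  refine ⟨?_, fun h => isUnit_and_inverse_sub_comp hαmUnit hR0 h hD⟩
  rw [hD]
  exact isUnit_add_comp_iff hαmUnit hR0 _ _
end
end

section
/- Assume α₋ is invertible and R(0) = δ − γ₋α₋⁻¹β₋ is invertible, and let Q ∈ B(X₊, X₋) be such that δ − γ₋Qβ₊ is invertible. Then Q satisfies the Riccati equation Q = α₋Qα₊ + (β₋ − α₋Qβ₊)(δ − γ₋Qβ₊)⁻¹(γ₊ − γ₋Qα₊) if and only if Q satisfies the Riccati equation Q = α₋Qα₊ + (β₋ − α₋Qβ₊)(δ − γ₋α₋⁻¹β₋)⁻¹(γ₊ − γ₋α₋⁻¹Q). (In other words, when R(0) is invertible, the solution set of the first Riccati equation equals the set of solutions of the second one for which δ − γ₋Qβ₊ is invertible.) -/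
open Metric ContinuousLinearMap

noncomputable section

/-- If `D = R + g B` and `C = E + g S` with `R`, `D` invertible, then `S = B R⁻¹ E` implies
`S = B D⁻¹ C`. -/
theorem eq_comp_inverse_of_eq_add_comp {𝕜 U X Y : Type*} [NontriviallyNormedField 𝕜]
    [NormedAddCommGroup U] [NormedSpace 𝕜 U] [NormedAddCommGroup X] [NormedSpace 𝕜 X]
    [NormedAddCommGroup Y] [NormedSpace 𝕜 Y]
    {B : U →L[𝕜] Y} {R D : U →L[𝕜] U} {g : Y →L[𝕜] U} {C E : X →L[𝕜] U} {S : X →L[𝕜] Y}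
    (hR : IsUnit R) (hD : IsUnit D)
    (hDR : D = R + g ∘L B) (hCE : C = E + g ∘L S) (h : S = (B ∘L Ring.inverse R) ∘L E) :
    S = (B ∘L Ring.inverse D) ∘L C := by
  have hRinv (x : U) : R (Ring.inverse R x) = x :=
    DFunLike.congr_fun (Ring.mul_inverse_cancel R hR) x
  have hDinv (x : U) : Ring.inverse D (D x) = x :=
    DFunLike.congr_fun (Ring.inverse_mul_cancel D hD) x
  have hC (x : X) : C x = D (Ring.inverse R (E x)) := by
    rw [hCE, h, hDR]
    simp [hRinv]
  ext x
  simp only [comp_apply, hC, hDinv]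
  exact DFunLike.congr_fun h x

variable {U Xp Xm : Type*}
  [NormedAddCommGroup U] [InnerProductSpace ℂ U] [CompleteSpace U]
  [NormedAddCommGroup Xp] [InnerProductSpace ℂ Xp] [CompleteSpace Xp]
  [NormedAddCommGroup Xm] [InnerProductSpace ℂ Xm] [CompleteSpace Xm]

/-- Assume `α₋` and `R(0) = δ − γ₋α₋⁻¹β₋` are invertible and `δ − γ₋Qβ₊` is invertible.
Then `Q` solves `Q = α₋Qα₊ + (β₋ − α₋Qβ₊)(δ − γ₋Qβ₊)⁻¹(γ₊ − γ₋Qα₊)` if and only if `Q`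
solves `Q = α₋Qα₊ + (β₋ − α₋Qβ₊)(δ − γ₋α₋⁻¹β₋)⁻¹(γ₊ − γ₋α₋⁻¹Q)`. -/
theorem riccati_first_iff_second
    (δ : U →L[ℂ] U) (γp : Xp →L[ℂ] U) (αp : Xp →L[ℂ] Xp) (βp : U →L[ℂ] Xp)
    (γm : Xm →L[ℂ] U) (αm : Xm →L[ℂ] Xm) (βm : U →L[ℂ] Xm)
    (hαp : spectrum ℂ αp ⊆ ball (0 : ℂ) 1) (hαm : spectrum ℂ αm ⊆ ball (0 : ℂ) 1)
    (hαmUnit : IsUnit αm)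
    (hR0 : IsUnit (δ - (γm ∘L Ring.inverse αm) ∘L βm))
    (Q : Xp →L[ℂ] Xm) (hQ : IsUnit (δ - (γm ∘L Q) ∘L βp)) :
    (Q = (αm ∘L Q) ∘L αp +
        ((βm - (αm ∘L Q) ∘L βp) ∘L Ring.inverse (δ - (γm ∘L Q) ∘L βp)) ∘L
          (γp - (γm ∘L Q) ∘L αp)) ↔
    (Q = (αm ∘L Q) ∘L αp +
        ((βm - (αm ∘L Q) ∘L βp) ∘L Ring.inverse (δ - (γm ∘L Ring.inverse αm) ∘L βm)) ∘L
          (γp - (γm ∘L Ring.inverse αm) ∘L Q)) := by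
  have hinv (x : Xm) : Ring.inverse αm (αm x) = x :=
    DFunLike.congr_fun (Ring.inverse_mul_cancel αm hαmUnit) x
  have hDR : δ - (γm ∘L Q) ∘L βp = (δ - (γm ∘L Ring.inverse αm) ∘L βm) +
      (γm ∘L Ring.inverse αm) ∘L (βm - (αm ∘L Q) ∘L βp) := by
    ext x
    simp [hinv]
  have hCE : γp - (γm ∘L Q) ∘L αp = (γp - (γm ∘L Ring.inverse αm) ∘L Q) +
      (γm ∘L Ring.inverse αm) ∘L (Q - (αm ∘L Q) ∘L αp) := by
    ext x
    simp [hinv]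
  rw [← sub_eq_iff_eq_add', ← sub_eq_iff_eq_add']
  constructor
  · refine eq_comp_inverse_of_eq_add_comp (g := -(γm ∘L Ring.inverse αm)) hQ hR0 ?_ ?_
    · rw [hDR, neg_comp, add_neg_cancel_right]
    · rw [hCE, neg_comp, add_neg_cancel_right]
  · exact eq_comp_inverse_of_eq_add_comp hR0 hQ hDR hCE
end
end

section
/- Assume α₋ is invertible and R(0) = δ − γ₋α₋⁻¹β₋ is invertible, and let Q ∈ B(X₊, X₋) be such that δ − γ₋Qβ₊ is invertible. If Q satisfies either the Riccati equation Q = α₋Qα₊ + (β₋ − α₋Qβ₊)(δ − γ₋Qβ₊)⁻¹(γ₊ − γ₋Qα₊) or the Riccati equation Q = α₋Qα₊ + (β₋ − α₋Qβ₊)(δ − γ₋α₋⁻¹β₋)⁻¹(γ₊ − γ₋α₋⁻¹Q), then the identity (δ − γ₋Qβ₊)⁻¹(γ₊ − γ₋Qα₊) = (δ − γ₋α₋⁻¹β₋)⁻¹(γ₊ − γ₋α₋⁻¹Q) holds. -/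
open Metric ContinuousLinearMap

noncomputable section

section RiccatiResidual

variable {U Xp Xm : Type*}
  [NormedAddCommGroup U] [InnerProductSpace ℂ U]
  [NormedAddCommGroup Xp] [InnerProductSpace ℂ Xp]
  [NormedAddCommGroup Xm] [InnerProductSpace ℂ Xm]

/-- If `Q = α₋Qα₊ + (β₋ − α₋Qβ₊)K` with `α₋` invertible, then `K` has the same residual in the
equations `(δ − γ₋Qβ₊)K = γ₊ − γ₋Qα₊` and `(δ − γ₋α₋⁻¹β₋)K = γ₊ − γ₋α₋⁻¹Q`. -/
theorem riccati_residual_eq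
    (δ : U →L[ℂ] U) (γp : Xp →L[ℂ] U) (αp : Xp →L[ℂ] Xp) (βp : U →L[ℂ] Xp)
    (γm : Xm →L[ℂ] U) (αm : Xm →L[ℂ] Xm) (βm : U →L[ℂ] Xm) (hαm : IsUnit αm)
    (Q : Xp →L[ℂ] Xm) (K : Xp →L[ℂ] U)
    (hK : Q = (αm ∘L Q) ∘L αp + (βm - (αm ∘L Q) ∘L βp) ∘L K) :
    (γp - (γm ∘L Q) ∘L αp) - (δ - (γm ∘L Q) ∘L βp) ∘L K =
      (γp - (γm ∘L Ring.inverse αm) ∘L Q) - (δ - (γm ∘L Ring.inverse αm) ∘L βm) ∘L K := by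
  have hinv (y : Xm) : Ring.inverse αm (αm y) = y :=
    DFunLike.congr_fun (Ring.inverse_mul_cancel αm hαm) y
  ext x
  have hx : Ring.inverse αm (Q x) =
      Q (αp x) + (Ring.inverse αm (βm (K x)) - Q (βp (K x))) := by
    have h := congrArg (fun y => Ring.inverse αm y) (DFunLike.congr_fun hK x)
    simpa [hinv] using h
  simp only [sub_apply, comp_apply, hx, map_add, map_sub]
  abel

/-- An invertible operator `D` satisfies `D⁻¹G = K` whenever `DK = G`. -/
theorem ring_inverse_comp_eq_of_comp_eq {D : U →L[ℂ] U} (hD : IsUnit D) {G K : Xp →L[ℂ] U}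
    (h : D ∘L K = G) : Ring.inverse D ∘L G = K := by
  rw [← h, ← comp_assoc, ← mul_def, Ring.inverse_mul_cancel D hD, one_def, id_comp]

/-- An invertible operator `D` satisfies `D(D⁻¹G) = G`. -/
theorem comp_ring_inverse_comp {D : U →L[ℂ] U} (hD : IsUnit D) (G : Xp →L[ℂ] U) :
    D ∘L (Ring.inverse D ∘L G) = G := by
  rw [← comp_assoc, ← mul_def, Ring.mul_inverse_cancel D hD, one_def, id_comp]

end RiccatiResidual

variable {U Xp Xm : Type*}
  [NormedAddCommGroup U] [InnerProductSpace ℂ U] [CompleteSpace U]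
  [NormedAddCommGroup Xp] [InnerProductSpace ℂ Xp] [CompleteSpace Xp]
  [NormedAddCommGroup Xm] [InnerProductSpace ℂ Xm] [CompleteSpace Xm]

/-- Assume `α₋` and `R(0) = δ − γ₋α₋⁻¹β₋` are invertible and `δ − γ₋Qβ₊` is invertible.
If `Q` solves either of the two Riccati equations, then
`(δ − γ₋Qβ₊)⁻¹(γ₊ − γ₋Qα₊) = (δ − γ₋α₋⁻¹β₋)⁻¹(γ₊ − γ₋α₋⁻¹Q)`. -/
theorem riccati_identity_of_solution
    (δ : U →L[ℂ] U) (γp : Xp →L[ℂ] U) (αp : Xp →L[ℂ] Xp) (βp : U →L[ℂ] Xp)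
    (γm : Xm →L[ℂ] U) (αm : Xm →L[ℂ] Xm) (βm : U →L[ℂ] Xm)
    (hαp : spectrum ℂ αp ⊆ ball (0 : ℂ) 1) (hαm : spectrum ℂ αm ⊆ ball (0 : ℂ) 1)
    (hαmUnit : IsUnit αm)
    (hR0 : IsUnit (δ - (γm ∘L Ring.inverse αm) ∘L βm))
    (Q : Xp →L[ℂ] Xm) (hQ : IsUnit (δ - (γm ∘L Q) ∘L βp))
    (hsol : (Q = (αm ∘L Q) ∘L αp +
        ((βm - (αm ∘L Q) ∘L βp) ∘L Ring.inverse (δ - (γm ∘L Q) ∘L βp)) ∘L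
          (γp - (γm ∘L Q) ∘L αp)) ∨
      (Q = (αm ∘L Q) ∘L αp +
        ((βm - (αm ∘L Q) ∘L βp) ∘L Ring.inverse (δ - (γm ∘L Ring.inverse αm) ∘L βm)) ∘L
          (γp - (γm ∘L Ring.inverse αm) ∘L Q))) :
    Ring.inverse (δ - (γm ∘L Q) ∘L βp) ∘L (γp - (γm ∘L Q) ∘L αp) =
      Ring.inverse (δ - (γm ∘L Ring.inverse αm) ∘L βm) ∘L
        (γp - (γm ∘L Ring.inverse αm) ∘L Q) := by
  rcases hsol with h | h <;> rw [comp_assoc _ (Ring.inverse _)] at h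
  · have hres := riccati_residual_eq δ γp αp βp γm αm βm hαmUnit Q _ h
    rw [comp_ring_inverse_comp hQ, sub_self] at hres
    exact (ring_inverse_comp_eq_of_comp_eq hR0 (sub_eq_zero.mp hres.symm).symm).symm
  · have hres := riccati_residual_eq δ γp αp βp γm αm βm hαmUnit Q _ h
    rw [comp_ring_inverse_comp hR0, sub_self] at hres
    exact ring_inverse_comp_eq_of_comp_eq hQ (sub_eq_zero.mp hres).symm
end
end

section
/- Assume α₋ is invertible and R(0) = δ − γ₋α₋⁻¹β₋ is invertible. If Q ∈ B(X₊, X₋) is such that δ − γ₋Qβ₊ is invertible and Q solves the Riccati equation Q = α₋Qα₊ + (β₋ − α₋Qβ₊)(δ − γ₋Qβ₊)⁻¹(γ₊ − γ₋Qα₊), then α₊° := α₊ − β₊(δ − γ₋Qβ₊)⁻¹(γ₊ − γ₋Qα₊) is also given by α₊° = α₊ − β₊(δ − γ₋α₋⁻¹β₋)⁻¹(γ₊ − γ₋α₋⁻¹Q). -/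
open Metric ContinuousLinearMap

noncomputable section

variable {U Xp Xm : Type*}
  [NormedAddCommGroup U] [InnerProductSpace ℂ U] [CompleteSpace U]
  [NormedAddCommGroup Xp] [InnerProductSpace ℂ Xp] [CompleteSpace Xp]
  [NormedAddCommGroup Xm] [InnerProductSpace ℂ Xm] [CompleteSpace Xm]

theorem ringInverse_apply_apply {E : Type*} [NormedAddCommGroup E] [NormedSpace ℂ E]
    {a : E →L[ℂ] E} (ha : IsUnit a) (v : E) : Ring.inverse a (a v) = v :=
  congrArg (fun f : E →L[ℂ] E => f v) (Ring.inverse_mul_cancel a ha)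

/-- Assume `α₋` and `R(0) = δ − γ₋α₋⁻¹β₋` are invertible. If `δ − γ₋Qβ₊` is invertible
and `Q` solves the Riccati equation (R1), then
`α₊° = α₊ − β₊(δ − γ₋Qβ₊)⁻¹(γ₊ − γ₋Qα₊)` is also given by
`α₊° = α₊ − β₊(δ − γ₋α₋⁻¹β₋)⁻¹(γ₊ − γ₋α₋⁻¹Q)`. -/
theorem alphaPcirc_alt_formula
    (δ : U →L[ℂ] U) (γp : Xp →L[ℂ] U) (αp : Xp →L[ℂ] Xp) (βp : U →L[ℂ] Xp)
    (γm : Xm →L[ℂ] U) (αm : Xm →L[ℂ] Xm) (βm : U →L[ℂ] Xm)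
    (hαp : spectrum ℂ αp ⊆ ball (0 : ℂ) 1) (hαm : spectrum ℂ αm ⊆ ball (0 : ℂ) 1)
    (hαmUnit : IsUnit αm)
    (hR0 : IsUnit (δ - (γm ∘L Ring.inverse αm) ∘L βm))
    (Q : Xp →L[ℂ] Xm) (hQ : IsUnit (δ - (γm ∘L Q) ∘L βp))
    (hsol : Q = (αm ∘L Q) ∘L αp +
      ((βm - (αm ∘L Q) ∘L βp) ∘L Ring.inverse (δ - (γm ∘L Q) ∘L βp)) ∘L
        (γp - (γm ∘L Q) ∘L αp)) :
    αp - (βp ∘L Ring.inverse (δ - (γm ∘L Q) ∘L βp)) ∘L (γp - (γm ∘L Q) ∘L αp) =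
      αp - (βp ∘L Ring.inverse (δ - (γm ∘L Ring.inverse αm) ∘L βm)) ∘L
        (γp - (γm ∘L Ring.inverse αm) ∘L Q) := by
  congr 1
  ext x
  simp only [comp_apply]
  congr 1
  set w := Ring.inverse (δ - (γm ∘L Q) ∘L βp) ((γp - (γm ∘L Q) ∘L αp) x)
  have hΔ : (δ - (γm ∘L Q) ∘L βp) w = (γp - (γm ∘L Q) ∘L αp) x :=
    congrArg (fun f : U →L[ℂ] U => f ((γp - (γm ∘L Q) ∘L αp) x))
      (Ring.mul_inverse_cancel _ hQ)
  have hx : Q x = αm (Q (αp x)) + (βm w - αm (Q (βp w))) :=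
    congrArg (fun f : Xp →L[ℂ] Xm => f x) hsol
  have hinv : Ring.inverse αm (Q x) = Q (αp x) + (Ring.inverse αm (βm w) - Q (βp w)) := by
    rw [hx, map_add, map_sub, ringInverse_apply_apply hαmUnit, ringInverse_apply_apply hαmUnit]
  have hR : (δ - (γm ∘L Ring.inverse αm) ∘L βm) w =
      (γp - (γm ∘L Ring.inverse αm) ∘L Q) x := by
    simp only [sub_apply, comp_apply] at hΔ ⊢
    rw [hinv, map_add, map_sub, sub_eq_iff_eq_add.mp hΔ]
    abel
  rw [← hR, ringInverse_apply_apply hR0]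
end
end

section
/- Assume α₋ is invertible and R(0) = δ − γ₋α₋⁻¹β₋ is invertible, and let Q ∈ B(X₊, X₋) be a solution of the Riccati equation Q = α₋Qα₊ + (β₋ − α₋Qβ₊)(δ − γ₋α₋⁻¹β₋)⁻¹(γ₊ − γ₋α₋⁻¹Q). Let A^× be the block operator on X₋ ⊕ X₊ with entries A^×₁₁ = α₋⁻¹ + α₋⁻¹β₋R(0)⁻¹γ₋α₋⁻¹, A^×₁₂ = −α₋⁻¹β₋R(0)⁻¹γ₊, A^×₂₁ = β₊R(0)⁻¹γ₋α₋⁻¹, A^×₂₂ = α₊ − β₊R(0)⁻¹γ₊, and set α₊° := α₊ − β₊R(0)⁻¹(γ₊ − γ₋α₋⁻¹Q). Then A^×(Qx, x) = (Qα₊°x, α₊°x) for every x ∈ X₊; in particular, the subspace {(Qx, x) : x ∈ X₊} is invariant under A^×. -/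
open Metric ContinuousLinearMap

noncomputable section

variable {U Xp Xm : Type*}
  [NormedAddCommGroup U] [InnerProductSpace ℂ U] [CompleteSpace U]
  [NormedAddCommGroup Xp] [InnerProductSpace ℂ Xp] [CompleteSpace Xp]
  [NormedAddCommGroup Xm] [InnerProductSpace ℂ Xm] [CompleteSpace Xm]

/-- The 2×2 block operator `[T₁₁, T₁₂; T₂₁, T₂₂]` on the direct sum `X₋ ⊕ X₊`. -/
def blockOp (T11 : Xm →L[ℂ] Xm) (T12 : Xp →L[ℂ] Xm) (T21 : Xm →L[ℂ] Xp)
    (T22 : Xp →L[ℂ] Xp) : (Xm × Xp) →L[ℂ] (Xm × Xp) :=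
  (T11.coprod T12).prod (T21.coprod T22)

/-- If `Q` solves `Q = α₋Qα₊ + (β₋ − α₋Qβ₊)R(0)⁻¹(γ₊ − γ₋α₋⁻¹Q)`, then the graph
subspace `{(Qx, x) : x ∈ X₊}` is invariant under the block operator `A^×`; more
precisely `A^×(Qx, x) = (Qα₊°x, α₊°x)` with `α₊° = α₊ − β₊R(0)⁻¹(γ₊ − γ₋α₋⁻¹Q)`. -/
theorem graph_invariant_under_Atimes
    (δ : U →L[ℂ] U) (γp : Xp →L[ℂ] U) (αp : Xp →L[ℂ] Xp) (βp : U →L[ℂ] Xp)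
    (γm : Xm →L[ℂ] U) (αm : Xm →L[ℂ] Xm) (βm : U →L[ℂ] Xm)
    (hαp : spectrum ℂ αp ⊆ ball (0 : ℂ) 1) (hαm : spectrum ℂ αm ⊆ ball (0 : ℂ) 1)
    (hαmUnit : IsUnit αm)
    (R0 : U →L[ℂ] U) (hR0def : R0 = δ - (γm ∘L Ring.inverse αm) ∘L βm)
    (hR0 : IsUnit R0)
    (Q : Xp →L[ℂ] Xm)
    (hsol : Q = (αm ∘L Q) ∘L αp +
      ((βm - (αm ∘L Q) ∘L βp) ∘L Ring.inverse R0) ∘L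
        (γp - (γm ∘L Ring.inverse αm) ∘L Q))
    (Ax : (Xm × Xp) →L[ℂ] (Xm × Xp))
    (hAx : Ax = blockOp
      (Ring.inverse αm +
        ((Ring.inverse αm ∘L βm) ∘L Ring.inverse R0) ∘L (γm ∘L Ring.inverse αm))
      (-(((Ring.inverse αm ∘L βm) ∘L Ring.inverse R0) ∘L γp))
      ((βp ∘L Ring.inverse R0) ∘L (γm ∘L Ring.inverse αm))
      (αp - (βp ∘L Ring.inverse R0) ∘L γp))
    (αpcirc : Xp →L[ℂ] Xp)
    (hαpcirc : αpcirc = αp - (βp ∘L Ring.inverse R0) ∘L (γp - (γm ∘L Ring.inverse αm) ∘L Q)) :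
    ∀ x : Xp, Ax (Q x, x) = (Q (αpcirc x), αpcirc x) := by
  intro x
  have hinv : ∀ y, Ring.inverse αm (αm y) = y := fun y =>
    DFunLike.congr_fun (Ring.inverse_mul_cancel αm hαmUnit) y
  have hx : Q x - βm (Ring.inverse R0 (γp x - γm (Ring.inverse αm (Q x)))) =
      αm (Q (αpcirc x)) := by
    have h := DFunLike.congr_fun hsol x
    simp only [add_apply, sub_apply, comp_apply] at h
    rw [sub_eq_iff_eq_add]
    refine h.trans ?_
    simp only [hαpcirc, sub_apply, comp_apply, map_sub]
    abel
  have hQ := congrArg (Ring.inverse αm : Xm →L[ℂ] Xm) hx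
  rw [hinv] at hQ
  refine Prod.ext ?_ ?_
  · simp only [← hQ, hAx, blockOp, prod_apply, coprod_apply, add_apply, neg_apply, comp_apply,
      map_sub]
    abel
  · simp only [hAx, hαpcirc, blockOp, prod_apply, coprod_apply, sub_apply, comp_apply, map_sub]
    abel
end
end

section
/- Assume α₋ is invertible and R(0) = δ − γ₋α₋⁻¹β₋ is invertible, and let Q ∈ B(X₊, X₋) be a solution of the Riccati equation Q = α₋Qα₊ + (β₋ − α₋Qβ₊)(δ − γ₋α₋⁻¹β₋)⁻¹(γ₊ − γ₋α₋⁻¹Q). Let A^× be the block operator on X₋ ⊕ X₊ with entries A^×₁₁ = α₋⁻¹ + α₋⁻¹β₋R(0)⁻¹γ₋α₋⁻¹, A^×₁₂ = −α₋⁻¹β₋R(0)⁻¹γ₊, A^×₂₁ = β₊R(0)⁻¹γ₋α₋⁻¹, A^×₂₂ = α₊ − β₊R(0)⁻¹γ₊, set τ := α₋⁻¹ + α₋⁻¹(β₋ − α₋Qβ₊)R(0)⁻¹γ₋α₋⁻¹ and α₊° := α₊ − β₊R(0)⁻¹(γ₊ − γ₋α₋⁻¹Q), and suppose Z ∈ B(X₋,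 X₊) satisfies the Lyapunov equation Zτ − α₊°Z = −β₊R(0)⁻¹γ₋α₋⁻¹. Then, denoting by [I, Q; 0, I], [I, 0; Z, I] and their inverses [I, −Q; 0, I], [I, 0; −Z, I] the corresponding invertible block operators on X₋ ⊕ X₊, one has [I, 0; Z, I]·[I, −Q; 0, I]·A^×·[I, Q; 0, I]·[I, 0; −Z, I] = diag(τ, α₊°). -/
open Metric ContinuousLinearMap

noncomputable section

variable {U Xp Xm : Type*}
  [NormedAddCommGroup U] [InnerProductSpace ℂ U] [CompleteSpace U]
  [NormedAddCommGroup Xp] [InnerProductSpace ℂ Xp] [CompleteSpace Xp]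
  [NormedAddCommGroup Xm] [InnerProductSpace ℂ Xm] [CompleteSpace Xm]

theorem blockOp_mul (S11 T11 : Xm →L[ℂ] Xm) (S12 T12 : Xp →L[ℂ] Xm) (S21 T21 : Xm →L[ℂ] Xp)
    (S22 T22 : Xp →L[ℂ] Xp) :
    blockOp S11 S12 S21 S22 * blockOp T11 T12 T21 T22 =
      blockOp (S11 ∘L T11 + S12 ∘L T21) (S11 ∘L T12 + S12 ∘L T22)
        (S21 ∘L T11 + S22 ∘L T21) (S21 ∘L T12 + S22 ∘L T22) := by
  ext x <;> simp [blockOp]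

/-- Block diagonalization of `A^×`: if `Q` solves the Riccati equation and `Z` solves
the Lyapunov equation `Zτ − α₊°Z = −β₊R(0)⁻¹γ₋α₋⁻¹`, then
`[I,0;Z,I]·[I,−Q;0,I]·A^×·[I,Q;0,I]·[I,0;−Z,I] = diag(τ, α₊°)`. -/
theorem Atimes_block_diagonalization
    (δ : U →L[ℂ] U) (γp : Xp →L[ℂ] U) (αp : Xp →L[ℂ] Xp) (βp : U →L[ℂ] Xp)
    (γm : Xm →L[ℂ] U) (αm : Xm →L[ℂ] Xm) (βm : U →L[ℂ] Xm)
    (hαp : spectrum ℂ αp ⊆ ball (0 : ℂ) 1) (hαm : spectrum ℂ αm ⊆ ball (0 : ℂ) 1)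
    (hαmUnit : IsUnit αm)
    (R0 : U →L[ℂ] U) (hR0def : R0 = δ - (γm ∘L Ring.inverse αm) ∘L βm)
    (hR0 : IsUnit R0)
    (Q : Xp →L[ℂ] Xm)
    (hsol : Q = (αm ∘L Q) ∘L αp +
      ((βm - (αm ∘L Q) ∘L βp) ∘L Ring.inverse R0) ∘L
        (γp - (γm ∘L Ring.inverse αm) ∘L Q))
    (Ax : (Xm × Xp) →L[ℂ] (Xm × Xp))
    (hAx : Ax = blockOp
      (Ring.inverse αm +
        ((Ring.inverse αm ∘L βm) ∘L Ring.inverse R0) ∘L (γm ∘L Ring.inverse αm))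
      (-(((Ring.inverse αm ∘L βm) ∘L Ring.inverse R0) ∘L γp))
      ((βp ∘L Ring.inverse R0) ∘L (γm ∘L Ring.inverse αm))
      (αp - (βp ∘L Ring.inverse R0) ∘L γp))
    (τ : Xm →L[ℂ] Xm)
    (hτ : τ = Ring.inverse αm +
      ((Ring.inverse αm ∘L (βm - (αm ∘L Q) ∘L βp)) ∘L Ring.inverse R0) ∘L
        (γm ∘L Ring.inverse αm))
    (αpcirc : Xp →L[ℂ] Xp)
    (hαpcirc : αpcirc = αp - (βp ∘L Ring.inverse R0) ∘L (γp - (γm ∘L Ring.inverse αm) ∘L Q))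
    (Z : Xm →L[ℂ] Xp)
    (hZ : Z ∘L τ - αpcirc ∘L Z = -((βp ∘L Ring.inverse R0) ∘L (γm ∘L Ring.inverse αm))) :
    blockOp (1 : Xm →L[ℂ] Xm) 0 Z (1 : Xp →L[ℂ] Xp) *
        blockOp (1 : Xm →L[ℂ] Xm) (-Q) 0 (1 : Xp →L[ℂ] Xp) *
        Ax *
        blockOp (1 : Xm →L[ℂ] Xm) Q 0 (1 : Xp →L[ℂ] Xp) *
        blockOp (1 : Xm →L[ℂ] Xm) 0 (-Z) (1 : Xp →L[ℂ] Xp) =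
      blockOp τ 0 0 αpcirc := by
  have hinv : ∀ x, Ring.inverse αm (αm x) = x := fun x => by
    rw [← mul_apply_eq_comp, Ring.inverse_mul_cancel _ hαmUnit,
      one_apply_eq_self]
  -- The Riccati equation multiplied on the left by the inverse of `αm`.
  have hric : ∀ x, Ring.inverse αm (Q x) = Q (αp x) +
      (Ring.inverse αm (βm (Ring.inverse R0 (γp x - γm (Ring.inverse αm (Q x))))) -
        Q (βp (Ring.inverse R0 (γp x - γm (Ring.inverse αm (Q x)))))) := fun x => by
    have h := congrArg (fun y => Ring.inverse αm y) (DFunLike.congr_fun hsol x)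
    simpa only [_root_.add_apply, _root_.sub_apply,
      ContinuousLinearMap.comp_apply, map_add, map_sub (Ring.inverse αm), hinv] using h
  have hupper : blockOp (1 : Xm →L[ℂ] Xm) (-Q) 0 (1 : Xp →L[ℂ] Xp) * Ax *
      blockOp (1 : Xm →L[ℂ] Xm) Q 0 (1 : Xp →L[ℂ] Xp) =
      blockOp τ 0 ((βp ∘L Ring.inverse R0) ∘L (γm ∘L Ring.inverse αm)) αpcirc := by
    rw [hAx, blockOp_mul, blockOp_mul, hτ, hαpcirc]
    congr 1 <;> ext x
    · simp [hinv]
      abel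
    · have h := hric x
      simp only [map_sub] at h
      rw [← sub_eq_zero] at h
      simp only [_root_.add_apply, _root_.sub_apply,
        _root_.neg_apply, ContinuousLinearMap.comp_apply,
        one_apply_eq_self, _root_.zero_apply, map_add, map_sub, map_neg]
      refine Eq.trans ?_ h
      abel
    · simp
    · simp
      abel
  rw [mul_assoc (blockOp 1 0 Z 1), mul_assoc (blockOp 1 0 Z 1), hupper, blockOp_mul, blockOp_mul]
  congr 1 <;> ext x
  · simp
  · simp
  · have h := DFunLike.congr_fun hZ x
    rw [← sub_eq_zero] at h
    simp only [_root_.sub_apply, _root_.neg_apply,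
      ContinuousLinearMap.comp_apply] at h
    simp only [_root_.add_apply, _root_.neg_apply,
      ContinuousLinearMap.comp_apply, one_apply_eq_self,
      _root_.zero_apply, map_neg, map_zero]
    refine Eq.trans ?_ h
    abel
  · simp
end
end
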